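/- arXiv:0705.2253 — 2 statements merged into one kernel-verified Lean document; each statement's English description precedes it below -/
import Mathlib

section
/- Let (M,d) be a Polish length space of finite diameter, p ≥ 1, and κ ∈ (0,1], and let P be a Markov transition kernel on M such that the map x ↦ P_x from (M,d) to (Pr_{d,p}(M), W_{d,p}) is locally (1−κ)-Lipschitz. Then there exists a unique P-invariant Borel probability measure μ_* on M, and for every ε > 0 and every probability measure μ on M, W_{d,p}(μP^t, μ_*) ≤ ε whenever t ≥ κ^{-1} ln(diam_d(M)/ε); in particular the mixing time τ_{d,p}(ε) = min{t ∈ ℕ : W_{d,p}(μP^t, μ_*) ≤ ε for all probability measures μ} satisfies τ_{d,p}(ε) ≤ ⌈κ^{-1} ln(diam_d(M)/ε)⌉. -/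
open MeasureTheory ENNReal Filter Topology Matrix

noncomputable section

/-- `η` is a coupling of `μ` and `ν`: its two marginals are `μ` and `ν`. -/
def IsCoupling {X : Type*} [MeasurableSpace X] (η : Measure (X × X)) (μ ν : Measure X) : Prop :=
  η.map Prod.fst = μ ∧ η.map Prod.snd = ν

/-- The `L^p` transportation cost (Wasserstein) distance associated with the distance
function `d`, with values in `ℝ≥0∞`:
`W_{d,p}(μ,ν) = inf { (∫ d(x,y)^p dη)^{1/p} : η a coupling of (μ,ν) }`. -/
def wassersteinE {X : Type*} [MeasurableSpace X] (d : X → X → ℝ≥0∞) (p : ℝ)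
    (μ ν : Measure X) : ℝ≥0∞ :=
  ⨅ (η : Measure (X × X)) (_ : IsCoupling η μ ν), (∫⁻ z, d z.1 z.2 ^ p ∂η) ^ (1 / p)

/-- `μ` has a finite `p`-th moment with respect to the distance function `d`. -/
def HasFiniteMoment {X : Type*} [MeasurableSpace X] (d : X → X → ℝ≥0∞) (p : ℝ)
    (μ : Measure X) : Prop :=
  ∃ o : X, ∫⁻ x, d o x ^ p ∂μ < ⊤

/-- The length of the curve `γ` over `[0,1]`, w.r.t. the distance function `d`:
the supremum, over all partitions `0 = t 0 ≤ t 1 ≤ ⋯ ≤ t k = 1` of `[0,1]`, of the sums of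
the distances between consecutive points of the curve. -/
def pathLengthE {X : Type*} (d : X → X → ℝ≥0∞) (γ : ℝ → X) : ℝ≥0∞ :=
  ⨆ (k : ℕ) (t : Fin (k + 1) → ℝ) (_ : Monotone t) (_ : t 0 = 0) (_ : t (Fin.last k) = 1),
    ∑ i : Fin k, d (γ (t i.castSucc)) (γ (t i.succ))

/-- The intrinsic (length) distance on the set `S` induced by the distance function `d`:
the infimum of `d`-lengths of continuous paths joining `a` to `b` inside `S`. -/
def intrinsicDistE {X : Type*} [TopologicalSpace X] (d : X → X → ℝ≥0∞) (S : Set X)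
    (a b : X) : ℝ≥0∞ :=
  ⨅ (γ : ℝ → X) (_ : ContinuousOn γ (Set.Icc 0 1)) (_ : Set.MapsTo γ (Set.Icc 0 1) S)
    (_ : γ 0 = a) (_ : γ 1 = b), pathLengthE d γ

/-- `t` iterated steps of the Markov transition kernel `P`, started from the initial
distribution `μ` (so `kernelIterate P t μ = μP^t`). -/
def kernelIterate {X : Type*} [MeasurableSpace X] (P : X → Measure X) :
    ℕ → Measure X → Measure X
  | 0, μ => μ
  | t + 1, μ => (kernelIterate P t μ).bind P

/-- `(M, dist)` is a length space: the distance between any two points is the infimum of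
the lengths of continuous curves joining them. -/
def IsLengthSpace (M : Type*) [MetricSpace M] : Prop :=
  ∀ x y : M, edist x y =
    ⨅ (γ : ℝ → M) (_ : ContinuousOn γ (Set.Icc 0 1)) (_ : γ 0 = x) (_ : γ 1 = y),
      pathLengthE edist γ

/-- `f : M → N` is locally `C`-Lipschitz with respect to the distance function `dN` on `N`:
for every `x ∈ M`, `limsup_{y → x} dN(f x, f y) / dist(x, y) ≤ C`. -/
def LocallyLipWith {M N : Type*} [MetricSpace M] (dN : N → N → ℝ≥0∞) (C : ℝ)
    (f : M → N) : Prop :=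
  ∀ x : M, Filter.limsup (fun y => dN (f x) (f y) / edist x y) (𝓝[≠] x) ≤ ENNReal.ofReal C

/-!
Probability measures on `M` with the distance `W_p` form a complete metric space, and in a length
space the local Lipschitz bound on `x ↦ P_x` is global: `W_p(P_x, P_y) ≤ (1 - κ) d(x, y)`.
Averaging near-optimal couplings of `P_x` and `P_y` against a coupling of `μ` and `ν` gives
`W_p(μP, νP) ≤ (1 - κ) W_p(μ, ν)`. This requires a measurable choice of couplings, which is
automatic when `μ` and `ν` are carried by countable sets. Such measures are `W_p`-dense, so
`μ ↦ μP` restricted to them has a `(1 - κ)`-Lipschitz extension; the extension agrees with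
`μ ↦ μP` everywhere, since both are continuous into the weak topology (`P` is Feller). Banach's
fixed point theorem and `(1 - κ)^t ≤ exp (-κ t)` conclude.
-/

section LengthSpace

open Set

lemma edist_le_mul_eVariationOn_Icc {E F : Type*} [PseudoEMetricSpace E] [PseudoEMetricSpace F]
    {f : ℝ → E} {g : ℝ → F} {c : ℝ≥0∞} {a b : ℝ} (hab : a ≤ b)
    (h : ∀ t ∈ Icc a b, ∀ᶠ s in 𝓝[Icc a b] t, edist (f t) (f s) ≤ c * edist (g t) (g s)) :
    edist (f a) (f b) ≤ c * eVariationOn g (Icc a b) := by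
  let S : Set ℝ := {t ∈ Icc a b | edist (f a) (f t) ≤ c * eVariationOn g (Icc a t)}
  have extend {s t : ℝ} (hs : s ∈ S) (hst : s ≤ t) (htb : t ≤ b)
      (h : edist (f s) (f t) ≤ c * edist (g s) (g t)) : t ∈ S := by
    refine ⟨⟨hs.1.1.trans hst, htb⟩, (edist_triangle _ (f s) _).trans ?_⟩
    have hadd := eVariationOn.Icc_add_Icc g (s := univ) hs.1.1 hst (mem_univ s)
    simp only [univ_inter] at hadd
    rw [← hadd, mul_add]
    refine add_le_add hs.2 (h.trans ?_)
    gcongr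
    exact eVariationOn.edist_le g (left_mem_Icc.2 hst) (right_mem_Icc.2 hst)
  have haS : a ∈ S := ⟨left_mem_Icc.2 hab, by simp⟩
  have hlub : IsLUB S (sSup S) := isLUB_csSup ⟨a, haS⟩ ⟨b, fun t ht ↦ ht.1.2⟩
  have hsup : sSup S ∈ Icc a b := ⟨hlub.1 haS, hlub.2 fun t ht ↦ ht.1.2⟩
  have hloc := eventually_nhdsWithin_iff.1 (h _ hsup)
  have hsupS : sSup S ∈ S := by
    obtain ⟨s, hs, hle⟩ := ((hlub.frequently_mem ⟨a, haS⟩).and_eventually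
      (hloc.filter_mono nhdsWithin_le_nhds)).exists
    refine extend hs (hlub.1 hs) hsup.2 ?_
    simpa only [edist_comm] using hle hs.1
  suffices sSup S = b from this ▸ hsupS.2
  by_contra hne
  have hlt : sSup S < b := lt_of_le_of_ne hsup.2 hne
  obtain ⟨s, hs, hle⟩ := ((eventually_mem_set.2 (Ioc_mem_nhdsGT hlt)).and
    (hloc.filter_mono nhdsWithin_le_nhds)).exists
  exact hs.1.not_ge (hlub.1 (extend hsupS hs.1.le hs.2 (hle ⟨hsup.1.trans hs.1.le, hs.2⟩)))

lemma eVariationOn_Icc_le_pathLengthE {E : Type*} [PseudoEMetricSpace E] (γ : ℝ → E) :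
    eVariationOn γ (Icc 0 1) ≤ pathLengthE edist γ := by
  refine iSup_le fun ⟨n, u, hu, hmem⟩ ↦ ?_
  let v : ℕ → ℝ
    | 0 => 0
    | i + 1 => if i ≤ n then u i else 1
  have hv : Monotone v := by
    refine monotone_nat_of_le_succ fun i ↦ ?_
    cases i with
    | zero => simpa [v] using (hmem 0).1
    | succ i =>
      simp only [v]
      split_ifs with h₁ h₂
      exacts [hu i.le_succ, (hmem i).2, by omega, le_rfl]
  calc ∑ i ∈ Finset.range n, edist (γ (u (i + 1))) (γ (u i))
      = ∑ i ∈ Finset.range n, edist (γ (v (i + 1))) (γ (v (i + 2))) := by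
        refine Finset.sum_congr rfl fun i hi ↦ ?_
        have hi := Finset.mem_range.1 hi
        simp only [v, if_pos hi.le, if_pos (Nat.succ_le_of_lt hi), edist_comm]
    _ ≤ ∑ i ∈ Finset.range (n + 2), edist (γ (v i)) (γ (v (i + 1))) := by
        rw [Finset.sum_range_succ', Finset.sum_range_succ, add_assoc]
        exact le_self_add
    _ = ∑ i : Fin (n + 2), edist (γ (v i.castSucc)) (γ (v i.succ)) :=
        (Fin.sum_univ_eq_sum_range (fun i ↦ edist (γ (v i)) (γ (v (i + 1)))) _).symm
    _ ≤ pathLengthE edist γ :=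
        le_iSup_of_le (n + 2) <| le_iSup_of_le (fun i : Fin (n + 3) ↦ v i) <|
          le_iSup_of_le (fun i j hij ↦ hv hij) <| le_iSup_of_le rfl <|
          le_iSup_of_le (by simp [v]) le_rfl

lemma LocallyLipWith.eventually_edist_le {M E : Type*} [MetricSpace M] [PseudoEMetricSpace E]
    {f : M → E} {C : ℝ} (hf : LocallyLipWith edist C f) {c : ℝ≥0∞} (hc : ENNReal.ofReal C < c)
    (x : M) : ∀ᶠ y in 𝓝 x, edist (f x) (f y) ≤ c * edist x y := by
  have h := eventually_lt_of_limsup_lt ((hf x).trans_lt hc)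
  rw [eventually_nhdsWithin_iff] at h
  filter_upwards [h] with y hy
  rcases eq_or_ne y x with rfl | hyx
  · simp
  · exact (ENNReal.div_le_iff (edist_pos.2 hyx.symm).ne' (edist_ne_top _ _)).1 (hy hyx).le

lemma IsLengthSpace.lipschitzWith {M E : Type*} [MetricSpace M] [PseudoEMetricSpace E]
    (hM : IsLengthSpace M) {f : M → E} {C : ℝ} (hf : LocallyLipWith edist C f) :
    LipschitzWith C.toNNReal f := by
  intro x y
  rcases eq_or_ne x y with rfl | hxy
  · simp
  rw [← ENNReal.div_le_iff (edist_pos.2 hxy).ne' (edist_ne_top _ _)]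
  refine le_of_forall_gt_imp_ge_of_dense fun c hc ↦ ?_
  obtain rfl | hctop := eq_or_ne c ⊤
  · exact le_top
  rw [ENNReal.div_le_iff (edist_pos.2 hxy).ne' (edist_ne_top _ _)]
  simp only [hM x y, ENNReal.mul_iInf_of_ne (pos_of_gt hc).ne' hctop]
  refine le_iInf₂ fun γ hγ ↦ le_iInf₂ fun h0 h1 ↦ ?_
  calc edist (f x) (f y) = edist (f (γ 0)) (f (γ 1)) := by rw [h0, h1]
    _ ≤ c * eVariationOn γ (Icc 0 1) :=
        edist_le_mul_eVariationOn_Icc (f := f ∘ γ) zero_le_one fun t ht ↦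
          (hγ t ht).eventually (hf.eventually_edist_le hc (γ t))
    _ ≤ c * pathLengthE edist γ := by
        gcongr
        exact eVariationOn_Icc_le_pathLengthE γ

end LengthSpace

section ENNRealNorm

variable {Ω : Type*} [MeasurableSpace Ω] {ρ : Measure Ω} {p : ℝ} {f g : Ω → ℝ≥0∞}

lemma eLpNorm'_map {Ω' E : Type*} [MeasurableSpace Ω'] [TopologicalSpace E]
    [ContinuousENorm E] [MeasurableSpace E] [OpensMeasurableSpace E] {f : Ω' → E}
    (hf : Measurable f) {X : Ω → Ω'} (hX : AEMeasurable X ρ) :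
    eLpNorm' f p (ρ.map X) = eLpNorm' (fun ω ↦ f (X ω)) p ρ := by
  rw [eLpNorm'_eq_lintegral_enorm, eLpNorm'_eq_lintegral_enorm,
    lintegral_map' (by fun_prop) hX]

lemma eLpNorm'_mono_ae (hp : 0 ≤ p) (h : ∀ᵐ ω ∂ρ, f ω ≤ g ω) :
    eLpNorm' f p ρ ≤ eLpNorm' g p ρ :=
  eLpNorm'_mono_enorm_ae hp (by simpa only [enorm_eq_self] using h)

lemma eLpNorm'_le_of_forall_le [IsProbabilityMeasure ρ] (hp : 0 < p) {c : ℝ≥0∞}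
    (h : ∀ ω, f ω ≤ c) : eLpNorm' f p ρ ≤ c :=
  (eLpNorm'_mono_ae hp.le (ae_of_all _ h)).trans_eq
    (eLpNorm'_const_of_isProbabilityMeasure c hp)

lemma lintegral_le_eLpNorm' [IsProbabilityMeasure ρ] (hp : 1 ≤ p) (hf : AEMeasurable f ρ) :
    ∫⁻ ω, f ω ∂ρ ≤ eLpNorm' f p ρ := by
  have := eLpNorm'_le_eLpNorm'_of_exponent_le one_pos hp ρ hf.aestronglyMeasurable
  simpa [eLpNorm'_eq_lintegral_enorm] using this

lemma eLpNorm'_tsum_le (hp : 1 ≤ p) {f : ℕ → Ω → ℝ≥0∞} (hf : ∀ n, AEMeasurable (f n) ρ) :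
    eLpNorm' (fun ω ↦ ∑' n, f n ω) p ρ ≤ ∑' n, eLpNorm' (f n) p ρ := by
  have hp₀ : 0 < p := one_pos.trans_le hp
  have hpow (ω : Ω) : (∑' n, f n ω) ^ p = ⨆ N, (∑ n ∈ Finset.range N, f n ω) ^ p := by
    rw [ENNReal.tsum_eq_iSup_nat]
    exact (ENNReal.orderIsoRpow p hp₀).map_iSup _
  have hmono (ω : Ω) : Monotone fun N : ℕ ↦ (∑ n ∈ Finset.range N, f n ω) ^ p := by
    intro N N' h
    dsimp only
    gcongr
  rw [eLpNorm'_eq_lintegral_enorm, one_div, ENNReal.rpow_inv_le_iff hp₀]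
  simp only [enorm_eq_self, hpow]
  rw [lintegral_iSup' (fun N ↦ by fun_prop) (ae_of_all _ hmono)]
  refine iSup_le fun N ↦ ?_
  rw [← ENNReal.rpow_inv_le_iff hp₀, ← one_div]
  calc (∫⁻ ω, (∑ n ∈ Finset.range N, f n ω) ^ p ∂ρ) ^ (1 / p)
      = eLpNorm' (∑ n ∈ Finset.range N, f n) p ρ := by
        simp only [eLpNorm'_eq_lintegral_enorm, enorm_eq_self, Finset.sum_apply]
    _ ≤ ∑ n ∈ Finset.range N, eLpNorm' (f n) p ρ :=
        eLpNorm'_sum_le (fun n _ ↦ (hf n).aestronglyMeasurable) hp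
    _ ≤ ∑' n, eLpNorm' (f n) p ρ := ENNReal.sum_le_tsum _

end ENNRealNorm

section Coupling

open ProbabilityTheory

lemma exists_measure_glue {Ω X Y : Type*} [MeasurableSpace Ω]
    [MeasurableSpace X] [StandardBorelSpace X] [Nonempty X]
    [MeasurableSpace Y] [StandardBorelSpace Y] [Nonempty Y]
    {η : Measure (Ω × X)} [IsFiniteMeasure η] {θ : Measure (Ω × Y)} [IsFiniteMeasure θ]
    (h : η.fst = θ.fst) :
    ∃ ζ : Measure (Ω × X × Y),
      ζ.map (Prod.map id Prod.fst) = η ∧ ζ.map (Prod.map id Prod.snd) = θ := by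
  refine ⟨η.fst ⊗ₘ (η.condKernel ×ₖ θ.condKernel), ?_, ?_⟩
  · rw [← Measure.compProd_map measurable_fst, ← Kernel.fst_eq, Kernel.fst_prod,
      η.disintegrate]
  · rw [← Measure.compProd_map measurable_snd, ← Kernel.snd_eq, Kernel.snd_prod, h,
      θ.disintegrate]

variable {M : Type*} [MeasurableSpace M] {p : ℝ} {μ ν ρ : Measure M} {η : Measure (M × M)}

lemma IsCoupling.isProbabilityMeasure [IsProbabilityMeasure μ] (hη : IsCoupling η μ ν) :
    IsProbabilityMeasure η := by
  have : IsProbabilityMeasure (η.map Prod.fst) := hη.1 ▸ inferInstance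
  exact Measure.isProbabilityMeasure_of_map (μ := η) Prod.fst

lemma isCoupling_prod (μ ν : Measure M) [IsProbabilityMeasure μ] [IsProbabilityMeasure ν] :
    IsCoupling (μ.prod ν) μ ν := by
  simp [IsCoupling]

lemma isCoupling_map {Ω : Type*} [MeasurableSpace Ω] (P : Measure Ω) {X Y : Ω → M}
    (hX : Measurable X) (hY : Measurable Y) :
    IsCoupling (P.map fun ω ↦ (X ω, Y ω)) (P.map X) (P.map Y) :=
  ⟨Measure.fst_map_prodMk hY, Measure.snd_map_prodMk hX⟩

variable [PseudoEMetricSpace M]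

lemma wassersteinE_eq_iInf_eLpNorm' (p : ℝ) (μ ν : Measure M) :
    wassersteinE edist p μ ν =
      ⨅ (η : Measure (M × M)) (_ : IsCoupling η μ ν), eLpNorm' (Function.uncurry edist) p η := by
  simp only [wassersteinE, eLpNorm'_eq_lintegral_enorm, enorm_eq_self, Function.uncurry_def]

lemma IsCoupling.wassersteinE_le (hη : IsCoupling η μ ν) :
    wassersteinE edist p μ ν ≤ eLpNorm' (Function.uncurry edist) p η :=
  (wassersteinE_eq_iInf_eLpNorm' p μ ν).trans_le (iInf₂_le η hη)

lemma exists_isCoupling_eLpNorm'_le_add [IsProbabilityMeasure μ] [IsProbabilityMeasure ν]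
    (p : ℝ) {ε : ℝ≥0∞} (hε : ε ≠ 0) :
    ∃ η, IsCoupling η μ ν ∧
      eLpNorm' (Function.uncurry edist) p η ≤ wassersteinE edist p μ ν + ε := by
  rcases eq_or_ne (wassersteinE edist p μ ν) ⊤ with htop | hfin
  · exact ⟨μ.prod ν, isCoupling_prod μ ν, by simp [htop]⟩
  · have hlt := ENNReal.lt_add_right hfin hε
    conv_lhs at hlt => rw [wassersteinE_eq_iInf_eLpNorm']
    obtain ⟨η, hη, hcost⟩ := by simpa only [iInf_lt_iff] using hlt
    exact ⟨η, hη, hcost.le⟩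

lemma le_mul_wassersteinE [IsProbabilityMeasure μ] [IsProbabilityMeasure ν] {a : ℝ≥0∞} {c : NNReal}
    (h : ∀ η, IsCoupling η μ ν → a ≤ c * eLpNorm' (Function.uncurry edist) p η) :
    a ≤ c * wassersteinE edist p μ ν := by
  rw [wassersteinE_eq_iInf_eLpNorm', iInf_subtype', ENNReal.mul_iInf'
    (fun hc ↦ absurd hc ENNReal.coe_ne_top) fun _ ↦ ⟨⟨μ.prod ν, isCoupling_prod μ ν⟩⟩]
  exact le_iInf fun η ↦ h η η.2

lemma wassersteinE_le_ediam [IsProbabilityMeasure μ] [IsProbabilityMeasure ν] (hp : 0 < p) :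
    wassersteinE edist p μ ν ≤ Metric.ediam (Set.univ : Set M) :=
  (isCoupling_prod μ ν).wassersteinE_le.trans <|
    eLpNorm'_le_of_forall_le hp fun _ ↦ Metric.edist_le_ediam_of_mem trivial trivial

variable [SecondCountableTopology M] [OpensMeasurableSpace M]

lemma eLpNorm'_uncurry_edist_map {Ω : Type*} [MeasurableSpace Ω] {P : Measure Ω} {Z : Ω → M × M}
    (hZ : AEMeasurable Z P) :
    eLpNorm' (Function.uncurry edist) p (P.map Z) =
      eLpNorm' (fun ω ↦ edist (Z ω).1 (Z ω).2) p P :=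
  eLpNorm'_map measurable_edist hZ

lemma wassersteinE_map_le {Ω : Type*} [MeasurableSpace Ω] (P : Measure Ω) {X Y : Ω → M}
    (hX : Measurable X) (hY : Measurable Y) :
    wassersteinE edist p (P.map X) (P.map Y) ≤ eLpNorm' (fun ω ↦ edist (X ω) (Y ω)) p P :=
  (isCoupling_map P hX hY).wassersteinE_le.trans_eq
    (eLpNorm'_uncurry_edist_map (by fun_prop))

lemma wassersteinE_self (hp : 0 < p) (μ : Measure M) : wassersteinE edist p μ μ = 0 := by
  have h := wassersteinE_map_le (p := p) μ measurable_id measurable_id (M := M)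
  simp only [Measure.map_id, edist_self] at h
  exact le_zero_iff.1 (h.trans_eq (eLpNorm'_zero hp))

lemma wassersteinE_comm (p : ℝ) (μ ν : Measure M) :
    wassersteinE edist p μ ν = wassersteinE edist p ν μ := by
  have hle (μ ν : Measure M) : wassersteinE edist p μ ν ≤ wassersteinE edist p ν μ := by
    conv_rhs => rw [wassersteinE_eq_iInf_eLpNorm']
    refine le_iInf₂ fun η hη ↦ ?_
    rw [← hη.1, ← hη.2]
    simpa only [edist_comm, Function.uncurry_def] using
      wassersteinE_map_le (p := p) η measurable_snd measurable_fst (M := M)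
  exact (hle μ ν).antisymm (hle ν μ)

lemma wassersteinE_triangle_left [StandardBorelSpace M] [IsProbabilityMeasure ν] (hp : 1 ≤ p) :
    wassersteinE edist p μ ρ ≤ wassersteinE edist p ν μ + wassersteinE edist p ν ρ := by
  have := nonempty_of_isProbabilityMeasure ν
  conv_rhs => rw [wassersteinE_eq_iInf_eLpNorm', wassersteinE_eq_iInf_eLpNorm']
  simp only [ENNReal.iInf_add, ENNReal.add_iInf]
  refine le_iInf₂ fun θ hθ ↦ le_iInf₂ fun η hη ↦ ?_
  have := hη.isProbabilityMeasure
  have := hθ.isProbabilityMeasure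
  obtain ⟨ζ, rfl, rfl⟩ := exists_measure_glue (hη.1.trans hθ.1.symm)
  have hμ : μ = ζ.map fun z ↦ z.2.1 := by
    rw [← hη.2, Measure.map_map (by fun_prop) (by fun_prop)]; rfl
  have hρ : ρ = ζ.map fun z ↦ z.2.2 := by
    rw [← hθ.2, Measure.map_map (by fun_prop) (by fun_prop)]; rfl
  calc wassersteinE edist p μ ρ
      ≤ eLpNorm' (fun z : M × M × M ↦ edist z.2.1 z.2.2) p ζ := by
        rw [hμ, hρ]
        exact wassersteinE_map_le ζ (by fun_prop) (by fun_prop)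
    _ ≤ eLpNorm' (fun z : M × M × M ↦ edist z.1 z.2.1 + edist z.1 z.2.2) p ζ :=
        eLpNorm'_mono_ae (by positivity) (ae_of_all _ fun z ↦ edist_triangle_left _ _ _)
    _ ≤ eLpNorm' (fun z : M × M × M ↦ edist z.1 z.2.1) p ζ
          + eLpNorm' (fun z : M × M × M ↦ edist z.1 z.2.2) p ζ :=
        eLpNorm'_add_le (by fun_prop) (by fun_prop) hp
    _ = _ := by
        rw [eLpNorm'_uncurry_edist_map (by fun_prop), eLpNorm'_uncurry_edist_map (by fun_prop)]
        rfl

open scoped BoundedContinuousFunction in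
lemma edist_integral_le_mul_wassersteinE [IsProbabilityMeasure μ] [IsProbabilityMeasure ν]
    (hp : 1 ≤ p) {f : M →ᵇ ℝ} {K : NNReal} (hf : LipschitzWith K f) :
    edist (∫ x, f x ∂μ) (∫ x, f x ∂ν) ≤ K * wassersteinE edist p μ ν := by
  refine le_mul_wassersteinE fun η hη ↦ ?_
  have := hη.isProbabilityMeasure
  have : Measurable f := f.continuous.measurable
  have hi₁ : Integrable (fun z : M × M ↦ f z.1) η :=
    Integrable.comp_measurable (f.integrable _) measurable_fst
  have hi₂ : Integrable (fun z : M × M ↦ f z.2) η :=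
    Integrable.comp_measurable (f.integrable _) measurable_snd
  calc edist (∫ x, f x ∂μ) (∫ x, f x ∂ν) = ‖∫ z, (f z.1 - f z.2) ∂η‖ₑ := by
        rw [integral_sub hi₁ hi₂, ← edist_eq_enorm_sub, ← hη.1, ← hη.2,
          integral_map (by fun_prop) (by fun_prop), integral_map (by fun_prop) (by fun_prop)]
    _ ≤ ∫⁻ z, ‖f z.1 - f z.2‖ₑ ∂η := enorm_integral_le_lintegral_enorm _
    _ ≤ ∫⁻ z : M × M, K * edist z.1 z.2 ∂η :=
        lintegral_mono fun z ↦ by rw [← edist_eq_enorm_sub]; exact hf z.1 z.2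
    _ = K * ∫⁻ z : M × M, edist z.1 z.2 ∂η := lintegral_const_mul _ (by fun_prop)
    _ ≤ K * eLpNorm' (Function.uncurry edist) p η := by
        gcongr
        exact lintegral_le_eLpNorm' hp (by fun_prop)

end Coupling

/-- Probability measures on `M`, equipped with the `L^p` Wasserstein distance `wassersteinE`.
No moment condition is imposed, so the distance may be infinite. -/
@[ext]
structure WassersteinSpace (p : ℝ) (M : Type*) [MeasurableSpace M] where
  toMeasure : Measure M
  [isProbabilityMeasure : IsProbabilityMeasure toMeasure]

namespace WassersteinSpace

attribute [instance] isProbabilityMeasure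

section Metric

variable {M : Type*} [MeasurableSpace M] {p : ℝ}

/-- The same probability measure, regarded as a point of the space of probability measures with
the topology of weak convergence. -/
def toProbabilityMeasure (μ : WassersteinSpace p M) : ProbabilityMeasure M :=
  ⟨μ.toMeasure, inferInstance⟩

lemma toProbabilityMeasure_injective :
    Function.Injective (toProbabilityMeasure : WassersteinSpace p M → ProbabilityMeasure M) :=
  fun _ _ h ↦ WassersteinSpace.ext (congrArg Subtype.val h)

section PseudoEMetric

variable [PseudoEMetricSpace M] [SecondCountableTopology M] [OpensMeasurableSpace M]
  [StandardBorelSpace M] [hp : Fact (1 ≤ p)]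

instance : PseudoEMetricSpace (WassersteinSpace p M) where
  edist μ ν := wassersteinE edist p μ.toMeasure ν.toMeasure
  edist_self μ := wassersteinE_self (one_pos.trans_le hp.out) _
  edist_comm μ ν := wassersteinE_comm p _ _
  edist_triangle μ ν ρ := by
    rw [wassersteinE_comm p μ.toMeasure ν.toMeasure]
    exact wassersteinE_triangle_left hp.out

lemma edist_def (μ ν : WassersteinSpace p M) :
    edist μ ν = wassersteinE edist p μ.toMeasure ν.toMeasure :=
  rfl

open scoped BoundedContinuousFunction in
lemma lipschitzWith_integral {f : M →ᵇ ℝ} {K : NNReal} (hf : LipschitzWith K f) :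
    LipschitzWith K fun μ : WassersteinSpace p M ↦ ∫ x, f x ∂μ.toMeasure :=
  fun _ _ ↦ edist_integral_le_mul_wassersteinE hp.out hf

lemma continuous_toProbabilityMeasure :
    Continuous (toProbabilityMeasure : WassersteinSpace p M → ProbabilityMeasure M) :=
  continuous_iff_continuousAt.2 fun _ ↦
    tendsto_iff_forall_lipschitz_integral_tendsto.2 fun f ⟨C, hC⟩ ⟨_, hf⟩ ↦
      (lipschitzWith_integral (f := .mkOfBound ⟨f, hf.continuous⟩ C hC) hf).continuous.tendsto _

lemma edist_le_ediam (μ ν : WassersteinSpace p M) :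
    edist μ ν ≤ Metric.ediam (Set.univ : Set M) :=
  wassersteinE_le_ediam (one_pos.trans_le hp.out)

end PseudoEMetric

variable [EMetricSpace M] [SecondCountableTopology M] [BorelSpace M] [StandardBorelSpace M]
  [Fact (1 ≤ p)]

instance : EMetricSpace (WassersteinSpace p M) where
  eq_of_edist_eq_zero h := toProbabilityMeasure_injective <|
    ((EMetric.inseparable_iff.2 h).map continuous_toProbabilityMeasure).eq

end Metric

end WassersteinSpace

section MarkovChain

open ProbabilityTheory

lemma map_compProd_comap {Ω X Y : Type*} [MeasurableSpace Ω] [MeasurableSpace X]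
    [MeasurableSpace Y] (ρ : Measure Ω) [SFinite ρ] (κ : Kernel X Y) [IsSFiniteKernel κ]
    {f : Ω → X} (hf : Measurable f) :
    (ρ ⊗ₘ κ.comap f hf).map (Prod.map f id) = ρ.map f ⊗ₘ κ := by
  refine Measure.ext_of_lintegral _ fun g hg ↦ ?_
  rw [lintegral_map hg (by fun_prop), Measure.lintegral_compProd (by fun_prop),
    Measure.lintegral_compProd hg, lintegral_map (by fun_prop) hf]
  rfl

lemma exists_markovChain {X : Type*} [MeasurableSpace X] (μ : Measure X) [IsProbabilityMeasure μ]
    (κ : ℕ → Kernel X X) [∀ n, IsMarkovKernel (κ n)] :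
    ∃ ρ : Measure (ℕ → X), IsProbabilityMeasure ρ ∧ ρ.map (fun x ↦ x 0) = μ ∧
      ∀ n, ρ.map (fun x ↦ (x n, x (n + 1))) = ρ.map (fun x ↦ x n) ⊗ₘ κ n := by
  let last (n : ℕ) (x : Π _ : Finset.Iic n, X) : X := x ⟨n, by simp⟩
  have hlast (n : ℕ) : Measurable (last n) := measurable_pi_apply _
  let κ' (n : ℕ) : Kernel (Π _ : Finset.Iic n, X) X := (κ n).comap (last n) (hlast n)
  have hκ' (n : ℕ) : IsMarkovKernel (κ' n) := by
    dsimp only [κ']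
    infer_instance
  let ρ : Measure (ℕ → X) := Kernel.trajMeasure (X := fun _ ↦ X) μ κ'
  let restrict (n : ℕ) := Preorder.frestrictLe (π := fun _ ↦ X) n
  have hrestrict (n : ℕ) : Measurable (restrict n) := by fun_prop
  refine ⟨ρ, inferInstance, ?_, fun n ↦ ?_⟩
  · have h₀ : ρ.map (restrict 0) =
        μ.map (MeasurableEquiv.piUnique (fun _ : Finset.Iic 0 ↦ X)).symm := by
      simp only [ρ, Kernel.trajMeasure]
      rw [Measure.map_comp _ _ (hrestrict 0), Kernel.traj_map_frestrictLe,
        Kernel.partialTraj_self, Measure.id_comp]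
    calc ρ.map (fun x ↦ x 0)
        = (ρ.map (restrict 0)).map (last 0) := (Measure.map_map (hlast 0) (hrestrict 0)).symm
      _ = μ.map id := by
          rw [h₀, Measure.map_map (hlast 0) (by fun_prop)]
          rfl
      _ = μ := Measure.map_id
  · calc ρ.map (fun x ↦ (x n, x (n + 1)))
        = (ρ.map fun x ↦ (restrict n x, x (n + 1))).map (Prod.map (last n) id) :=
          (Measure.map_map ((hlast n).prodMap measurable_id)
            ((hrestrict n).prodMk (measurable_pi_apply _))).symm
      _ = (ρ.map (restrict n) ⊗ₘ κ' n).map (Prod.map (last n) id) := by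
          rw [Kernel.map_frestrictLe_trajMeasure_compProd_eq_map_trajMeasure]
      _ = ρ.map (fun x ↦ x n) ⊗ₘ κ n := by
          rw [map_compProd_comap, Measure.map_map (hlast n) (hrestrict n)]
          rfl

lemma exists_process_of_isCoupling {X : Type*} [MeasurableSpace X] [StandardBorelSpace X]
    {m : ℕ → Measure X} [∀ n, IsProbabilityMeasure (m n)] {η : ℕ → Measure (X × X)}
    (hη : ∀ n, IsCoupling (η n) (m n) (m (n + 1))) :
    ∃ ρ : Measure (ℕ → X), IsProbabilityMeasure ρ ∧ (∀ n, ρ.map (fun x ↦ x n) = m n) ∧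
      ∀ n, ρ.map (fun x ↦ (x n, x (n + 1))) = η n := by
  have := nonempty_of_isProbabilityMeasure (m 0)
  have := fun n ↦ (hη n).isProbabilityMeasure
  obtain ⟨ρ, hρ, h₀, hstep⟩ := exists_markovChain (m 0) fun n ↦ (η n).condKernel
  have hpair {n : ℕ} (hn : ρ.map (fun x ↦ x n) = m n) :
      ρ.map (fun x ↦ (x n, x (n + 1))) = η n := by
    rw [hstep, hn, ← (hη n).1]
    exact (η n).disintegrate _
  have hmarg (n : ℕ) : ρ.map (fun x ↦ x n) = m n := by
    induction n with
    | zero => exact h₀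
    | succ n ih => rw [← (hη n).2, ← hpair ih, Measure.map_map (by fun_prop) (by fun_prop)]; rfl
  exact ⟨ρ, hρ, hmarg, fun n ↦ hpair (hmarg n)⟩

end MarkovChain

section Complete

variable {M : Type*} [EMetricSpace M] [CompleteSpace M] [SecondCountableTopology M]
  [MeasurableSpace M] [BorelSpace M] {p : ℝ}

lemma exists_measurable_tendsto_eLpNorm'_edist {Ω : Type*} [MeasurableSpace Ω] {ρ : Measure Ω}
    [IsProbabilityMeasure ρ] (hp : 1 ≤ p) {X : ℕ → Ω → M} (hX : ∀ n, Measurable (X n))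
    (hsum : ∑' n, eLpNorm' (fun ω ↦ edist (X n ω) (X (n + 1) ω)) p ρ ≠ ⊤) :
    ∃ Z : Ω → M, Measurable Z ∧
      Tendsto (fun n ↦ eLpNorm' (fun ω ↦ edist (X n ω) (Z ω)) p ρ) atTop (𝓝 0) := by
  have hfin : ∀ᵐ ω ∂ρ, ∑' n, edist (X n ω) (X (n + 1) ω) < ⊤ := by
    refine ae_lt_top (by fun_prop) (ne_top_of_le_ne_top hsum ?_)
    rw [lintegral_tsum (by fun_prop)]
    exact ENNReal.tsum_le_tsum fun n ↦ lintegral_le_eLpNorm' hp (by fun_prop)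
  have : Nonempty M := (nonempty_of_isProbabilityMeasure ρ).map (X 0)
  obtain ⟨Z, hZ, hlim⟩ := measurable_limit_of_tendsto_metrizable_ae
    (fun n ↦ (hX n).aemeasurable) (hfin.mono fun ω hω ↦ cauchySeq_tendsto_of_complete
      (cauchySeq_of_edist_le_of_tsum_ne_top _ (fun n ↦ le_rfl) hω.ne))
  refine ⟨Z, hZ, tendsto_of_tendsto_of_tendsto_of_le_of_le tendsto_const_nhds
    (ENNReal.tendsto_sum_nat_add _ hsum) (fun _ ↦ zero_le) fun n ↦ ?_⟩
  calc eLpNorm' (fun ω ↦ edist (X n ω) (Z ω)) p ρ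
      ≤ eLpNorm' (fun ω ↦ ∑' k, edist (X (k + n) ω) (X (k + n + 1) ω)) p ρ := by
        refine eLpNorm'_mono_ae (by positivity) (hlim.mono fun ω hω ↦ ?_)
        simpa only [add_comm n] using
          edist_le_tsum_of_edist_le_of_tendsto _ (fun k ↦ le_rfl) hω n
    _ ≤ ∑' k, eLpNorm' (fun ω ↦ edist (X (k + n) ω) (X (k + n + 1) ω)) p ρ :=
        eLpNorm'_tsum_le hp (by fun_prop)

namespace WassersteinSpace

variable [hp : Fact (1 ≤ p)]

lemma exists_tendsto_of_tsum_edist_ne_top {m : ℕ → WassersteinSpace p M}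
    (hm : ∑' n, edist (m n) (m (n + 1)) ≠ ⊤) : ∃ μ, Tendsto m atTop (𝓝 μ) := by
  obtain ⟨ε, hε, hεsum⟩ := ENNReal.exists_pos_sum_of_countable' one_ne_zero ℕ
  choose η hη hcost using fun n ↦ exists_isCoupling_eLpNorm'_le_add
    (μ := (m n).toMeasure) (ν := (m (n + 1)).toMeasure) p (hε n).ne'
  obtain ⟨ρ, hρ, hmarg, hpair⟩ := exists_process_of_isCoupling hη
  have hsum : ∑' n, eLpNorm' (fun x : ℕ → M ↦ edist (x n) (x (n + 1))) p ρ ≠ ⊤ := by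
    refine ne_top_of_le_ne_top (ENNReal.add_ne_top.2 ⟨hm, (hεsum.trans_le le_top).ne⟩) ?_
    rw [← ENNReal.tsum_add]
    refine ENNReal.tsum_le_tsum fun n ↦ le_trans (le_of_eq ?_) (hcost n)
    rw [← hpair n, eLpNorm'_uncurry_edist_map (by fun_prop)]
  obtain ⟨Z, hZ, hlim⟩ :=
    exists_measurable_tendsto_eLpNorm'_edist hp.out (fun n ↦ measurable_pi_apply n) hsum
  have := Measure.isProbabilityMeasure_map (μ := ρ) hZ.aemeasurable
  refine ⟨⟨ρ.map Z⟩, tendsto_iff_edist_tendsto_0.2 <| tendsto_of_tendsto_of_tendsto_of_le_of_le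
    tendsto_const_nhds hlim (fun _ ↦ zero_le) fun n ↦ ?_⟩
  rw [edist_def, ← hmarg n]
  exact wassersteinE_map_le ρ (by fun_prop) hZ

instance : CompleteSpace (WassersteinSpace p M) := by
  refine EMetric.complete_of_convergent_controlled_sequences (fun n ↦ (2⁻¹ : ℝ≥0∞) ^ n)
    (fun n ↦ by simp [ENNReal.pow_pos]) fun m hm ↦ exists_tendsto_of_tsum_edist_ne_top ?_
  refine ne_top_of_le_ne_top (ENNReal.ofNat_ne_top (n := 2))
    ((ENNReal.tsum_le_tsum fun n ↦ (hm n n (n + 1) le_rfl n.le_succ).le).trans_eq ?_)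
  rw [ENNReal.tsum_geometric, ENNReal.one_sub_inv_two, inv_inv]

end WassersteinSpace

end Complete

section KernelAction

open ProbabilityTheory

lemma aemeasurable_of_ae_mem_countable {α β : Type*} [MeasurableSpace α]
    [MeasurableSingletonClass α] [MeasurableSpace β] {μ : Measure α} {s : Set α}
    (hs : s.Countable) (h : ∀ᵐ x ∂μ, x ∈ s) (f : α → β) : AEMeasurable f μ := by
  have := hs.to_subtype
  rw [← Measure.restrict_eq_self_of_ae_mem h, aemeasurable_restrict_iff_comap_subtype
    hs.measurableSet]
  exact (measurable_of_countable _).aemeasurable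

lemma map_bind_of_forall_map_eq {Ω X Y Z : Type*} [MeasurableSpace Ω] [MeasurableSpace X]
    [MeasurableSpace Y] [MeasurableSpace Z] {ρ : Measure Ω} {θ : Ω → Measure X}
    (hθ : AEMeasurable θ ρ) (κ : Kernel Y Z) {f : Ω → Y} (hf : Measurable f) {g : X → Z}
    (hg : Measurable g) (h : ∀ ω, (θ ω).map g = κ (f ω)) :
    (ρ.bind θ).map g = κ ∘ₘ ρ.map f := by
  refine Measure.ext fun s hs ↦ ?_
  rw [Measure.map_apply hg hs, Measure.bind_apply (hg hs) hθ,
    Measure.bind_apply hs κ.aemeasurable, lintegral_map (κ.measurable_coe hs) hf]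
  exact lintegral_congr fun ω ↦ by rw [← h ω, Measure.map_apply hg hs]

lemma eLpNorm'_bind {Ω X : Type*} [MeasurableSpace Ω] [MeasurableSpace X] {ρ : Measure Ω}
    {θ : Ω → Measure X} (hθ : AEMeasurable θ ρ) {f : X → ℝ≥0∞} (hf : Measurable f) {p : ℝ}
    (hp : p ≠ 0) :
    eLpNorm' f p (ρ.bind θ) = eLpNorm' (fun ω ↦ eLpNorm' f p (θ ω)) p ρ := by
  simp only [eLpNorm'_eq_lintegral_enorm, enorm_eq_self]
  rw [Measure.lintegral_bind hθ (by fun_prop)]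
  simp only [← ENNReal.rpow_mul, one_div_mul_cancel hp, ENNReal.rpow_one]

open scoped BoundedContinuousFunction in
lemma continuous_integral_comp {X Y : Type*} [TopologicalSpace X] [MeasurableSpace X]
    [OpensMeasurableSpace X] [TopologicalSpace Y] [MeasurableSpace Y] [OpensMeasurableSpace Y]
    {κ : Kernel X Y} [IsMarkovKernel κ] {f : Y →ᵇ ℝ} (hf : Continuous fun x ↦ ∫ y, f y ∂κ x) :
    Continuous fun μ : ProbabilityMeasure X ↦ ∫ y, f y ∂(κ ∘ₘ (μ : Measure X)) := by
  let g : X →ᵇ ℝ := .ofNormedAddCommGroup (fun x ↦ ∫ y, f y ∂κ x) hf ‖f‖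
    fun x ↦ f.norm_integral_le_norm (κ x)
  have hg (μ : ProbabilityMeasure X) :
      ∫ y, f y ∂(κ ∘ₘ (μ : Measure X)) = ∫ x, g x ∂(μ : Measure X) := by
    have hint : Integrable f (κ ∘ₘ (μ : Measure X)) := f.integrable _
    rw [Measure.comp_eq_comp_const_apply] at hint ⊢
    exact Kernel.integral_comp hint
  simpa only [hg] using ProbabilityMeasure.continuous_integral_boundedContinuousFunction g

section Countable

variable {M : Type*} [PseudoEMetricSpace M] [SecondCountableTopology M] [MeasurableSpace M]
  [OpensMeasurableSpace M] {p : ℝ}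

lemma wassersteinE_comp_le_of_ae_mem_countable [MeasurableSingletonClass M] (hp : 1 ≤ p)
    {K : Kernel M M} [IsMarkovKernel K] {C : NNReal}
    (hK : ∀ x y, wassersteinE edist p (K x) (K y) ≤ C * edist x y) {μ ν : Measure M}
    [IsProbabilityMeasure μ] {η : Measure (M × M)} (hη : IsCoupling η μ ν) {s : Set (M × M)}
    (hs : s.Countable) (hηs : ∀ᵐ z ∂η, z ∈ s) :
    wassersteinE edist p (K ∘ₘ μ) (K ∘ₘ ν) ≤ C * eLpNorm' (Function.uncurry edist) p η := by
  have hp₀ : 0 < p := one_pos.trans_le hp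
  have := hη.isProbabilityMeasure
  refine ENNReal.le_of_forall_pos_le_add fun ε hε _ ↦ ?_
  choose θ hθ hcost using fun z : M × M ↦ exists_isCoupling_eLpNorm'_le_add
    (μ := K z.1) (ν := K z.2) p (ENNReal.coe_ne_zero.2 hε.ne')
  have hm {β : Type _} [MeasurableSpace β] (f : M × M → β) : AEMeasurable f η :=
    aemeasurable_of_ae_mem_countable hs hηs f
  have hcoupling : IsCoupling (η.bind θ) (K ∘ₘ μ) (K ∘ₘ ν) := by
    rw [← hη.1, ← hη.2]
    exact ⟨map_bind_of_forall_map_eq (hm θ) K measurable_fst measurable_fst fun z ↦ (hθ z).1,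
      map_bind_of_forall_map_eq (hm θ) K measurable_snd measurable_snd fun z ↦ (hθ z).2⟩
  calc wassersteinE edist p (K ∘ₘ μ) (K ∘ₘ ν)
      ≤ eLpNorm' (Function.uncurry edist) p (η.bind θ) := hcoupling.wassersteinE_le
    _ = eLpNorm' (fun z ↦ eLpNorm' (Function.uncurry edist) p (θ z)) p η :=
        eLpNorm'_bind (hm θ) measurable_edist hp₀.ne'
    _ ≤ eLpNorm' (fun z : M × M ↦ C * edist z.1 z.2 + ε) p η :=
        eLpNorm'_mono_ae hp₀.le <| ae_of_all _ fun z ↦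
          (hcost z).trans (by gcongr; exact hK z.1 z.2)
    _ ≤ eLpNorm' (fun z : M × M ↦ C * edist z.1 z.2) p η
          + eLpNorm' (fun _ ↦ (ε : ℝ≥0∞)) p η :=
        eLpNorm'_add_le (measurable_edist.const_mul _).aestronglyMeasurable (by fun_prop) hp
    _ ≤ C * eLpNorm' (Function.uncurry edist) p η + ε :=
        add_le_add
          (eLpNorm'_le_nnreal_smul_eLpNorm'_of_ae_le_mul' (ae_of_all _ fun _ ↦ le_rfl) hp₀)
          (eLpNorm'_le_of_forall_le hp₀ fun _ ↦ le_rfl)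

lemma exists_measurable_countable_range_edist_lt [Nonempty M] {ε : ℝ≥0∞} (hε : ε ≠ 0) :
    ∃ q : M → M, Measurable q ∧ (Set.range q).Countable ∧ ∀ x, edist (q x) x < ε := by
  classical
  have hex (x : M) : ∃ k, edist (TopologicalSpace.denseSeq M k) x < ε :=
    (TopologicalSpace.denseRange_denseSeq M).exists_mem_open
      (Metric.isOpen_eball (x := x) (ε := ε)) ⟨x, Metric.mem_eball_self (pos_iff_ne_zero.2 hε)⟩
  have hfind : Measurable fun x ↦ Nat.find (hex x) :=
    measurable_find hex fun k ↦ measurableSet_lt (by fun_prop) measurable_const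
  exact ⟨fun x ↦ TopologicalSpace.denseSeq M (Nat.find (hex x)),
    (measurable_of_countable _).comp hfind,
    (Set.countable_range _).mono (Set.range_comp_subset_range _ _), fun x ↦ Nat.find_spec (hex x)⟩

end Countable

namespace WassersteinSpace

/-- The action `μ ↦ μK` of a Markov kernel `K` on probability measures. -/
def bind {M : Type*} [MeasurableSpace M] {p : ℝ} (K : Kernel M M) [IsMarkovKernel K]
    (μ : WassersteinSpace p M) : WassersteinSpace p M :=
  ⟨K ∘ₘ μ.toMeasure⟩

/-- The probability measures giving full mass to a countable set. -/
def countablySupported (p : ℝ) (M : Type*) [MeasurableSpace M] : Set (WassersteinSpace p M) :=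
  {μ | ∃ s : Set M, s.Countable ∧ ∀ᵐ x ∂μ.toMeasure, x ∈ s}

variable {M : Type*} [EMetricSpace M] [SecondCountableTopology M]
  [MeasurableSpace M] [BorelSpace M] {p : ℝ} [hp : Fact (1 ≤ p)]

section StandardBorel

variable [StandardBorelSpace M]

lemma dense_countablySupported : Dense (countablySupported p M) := by
  refine EMetric.dense_iff.2 fun μ ε hε ↦ ?_
  have := nonempty_of_isProbabilityMeasure μ.toMeasure
  obtain ⟨δ, hδ₀, hδ⟩ := exists_between hε
  obtain ⟨q, hq, hcount, hclose⟩ := exists_measurable_countable_range_edist_lt (M := M) hδ₀.ne'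
  have := Measure.isProbabilityMeasure_map (μ := μ.toMeasure) hq.aemeasurable
  refine ⟨⟨μ.toMeasure.map q⟩, ?_, Set.range q, hcount, ?_⟩
  · have h := wassersteinE_map_le (p := p) μ.toMeasure hq measurable_id
    rw [Measure.map_id] at h
    exact (h.trans (eLpNorm'_le_of_forall_le (one_pos.trans_le hp.out)
      fun x ↦ (hclose x).le)).trans_lt hδ
  · exact (ae_map_iff hq.aemeasurable hcount.measurableSet).2 (ae_of_all _ Set.mem_range_self)

variable {K : Kernel M M} [IsMarkovKernel K] {C : NNReal}

lemma lipschitzOnWith_bind_countablySupported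
    (hK : LipschitzWith C fun x ↦ (⟨K x⟩ : WassersteinSpace p M)) :
    LipschitzOnWith C (bind K) (countablySupported p M) := by
  rintro μ ⟨s, hs, hμs⟩ ν ⟨t, ht, hνt⟩
  refine le_mul_wassersteinE fun η hη ↦
    wassersteinE_comp_le_of_ae_mem_countable hp.out hK hη (hs.prod ht) ?_
  rw [← hη.1] at hμs
  rw [← hη.2] at hνt
  exact (ae_of_ae_map measurable_fst.aemeasurable hμs).and
    (ae_of_ae_map measurable_snd.aemeasurable hνt)

lemma continuous_toProbabilityMeasure_bind
    (hK : LipschitzWith C fun x ↦ (⟨K x⟩ : WassersteinSpace p M)) :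
    Continuous fun μ : WassersteinSpace p M ↦ (μ.bind K).toProbabilityMeasure :=
  ProbabilityMeasure.continuous_iff_forall_continuous_integral.2 fun f ↦
    (continuous_integral_comp (ProbabilityMeasure.continuous_iff_forall_continuous_integral.1
      (continuous_toProbabilityMeasure.comp hK.continuous) f)).comp continuous_toProbabilityMeasure

end StandardBorel

lemma lipschitzWith_bind [CompleteSpace M] {K : Kernel M M} [IsMarkovKernel K] {C : NNReal}
    (hK : LipschitzWith C fun x ↦ (⟨K x⟩ : WassersteinSpace p M)) :
    LipschitzWith C (bind K : WassersteinSpace p M → WassersteinSpace p M) := by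
  have hdense := dense_countablySupported (p := p) (M := M)
  have hrestrict := (lipschitzOnWith_bind_countablySupported hK).to_restrict
  have hext := hdense.lipschitzWith_extend hrestrict
  suffices hdense.extend ((countablySupported p M).domRestrict (bind K)) = bind K from this ▸ hext
  have hweak := (continuous_toProbabilityMeasure.comp hext.continuous).ext_on hdense
    (continuous_toProbabilityMeasure_bind hK) fun μ hμ ↦
      congrArg toProbabilityMeasure (hdense.extend_eq hrestrict.continuous ⟨μ, hμ⟩)
  exact funext fun μ ↦ toProbabilityMeasure_injective (congrFun hweak μ)

end WassersteinSpace

end KernelAction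

section Mixing

open ProbabilityTheory WassersteinSpace

lemma kernelIterate_eq_iterate_bind {M : Type*} [MeasurableSpace M] {p : ℝ} (K : Kernel M M)
    [IsMarkovKernel K] (t : ℕ) (μ : WassersteinSpace p M) :
    kernelIterate K t μ.toMeasure = ((bind K)^[t] μ).toMeasure := by
  induction t with
  | zero => rfl
  | succ t ih => rw [Function.iterate_succ_apply', kernelIterate, ih]; rfl

lemma edist_iterate_bind_le {M : Type*} [EMetricSpace M] [CompleteSpace M]
    [SecondCountableTopology M] [MeasurableSpace M] [BorelSpace M] {p : ℝ} [Fact (1 ≤ p)]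
    {K : Kernel M M} [IsMarkovKernel K] {C : NNReal}
    (hK : LipschitzWith C (bind K : WassersteinSpace p M → WassersteinSpace p M))
    {μ : WassersteinSpace p M} (hμ : Function.IsFixedPt (bind K) μ) (ν : WassersteinSpace p M)
    (t : ℕ) : edist ((bind K)^[t] ν) μ ≤ C ^ t * Metric.ediam (Set.univ : Set M) :=
  calc edist ((bind K)^[t] ν) μ
      = edist ((bind K)^[t] ν) ((bind K)^[t] μ) := by rw [hμ.iterate t]
    _ ≤ (C ^ t : NNReal) * edist ν μ := hK.iterate t ν μ
    _ ≤ C ^ t * Metric.ediam (Set.univ : Set M) := by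
        rw [ENNReal.coe_pow]
        gcongr
        exact edist_le_ediam ν μ

lemma one_sub_pow_mul_le_of_inv_mul_log_le {κ D ε : ℝ} (hκ0 : 0 < κ) (hκ1 : κ ≤ 1) (hD : 0 ≤ D)
    (hε : 0 < ε) {t : ℕ} (ht : κ⁻¹ * Real.log (D / ε) ≤ t) : (1 - κ) ^ t * D ≤ ε := by
  obtain rfl | hD := hD.eq_or_lt
  · simpa using hε.le
  have hlog : Real.log (D / ε) ≤ κ * t := (inv_mul_le_iff₀ hκ0).1 ht
  calc (1 - κ) ^ t * D ≤ Real.exp (-κ) ^ t * D := by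
        have := sub_nonneg.2 hκ1
        gcongr
        exact Real.one_sub_le_exp_neg κ
    _ = Real.exp (-(κ * t)) * D := by rw [← Real.exp_nat_mul]; ring_nf
    _ ≤ Real.exp (-Real.log (D / ε)) * D := by gcongr
    _ = ε := by rw [Real.exp_neg, Real.exp_log (by positivity)]; field_simp

lemma ofReal_one_sub_pow_mul_le_of_inv_mul_log_le {κ ε : ℝ} {D : ℝ≥0∞} (hκ0 : 0 < κ)
    (hκ1 : κ ≤ 1) (hD : D ≠ ⊤) (hε : 0 < ε) {t : ℕ}
    (ht : κ⁻¹ * Real.log (D.toReal / ε) ≤ t) :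
    ENNReal.ofReal (1 - κ) ^ t * D ≤ ENNReal.ofReal ε := by
  have hκ := sub_nonneg.2 hκ1
  rw [← ENNReal.ofReal_toReal hD, ← ENNReal.ofReal_pow hκ, ← ENNReal.ofReal_mul (pow_nonneg hκ t)]
  exact ENNReal.ofReal_le_ofReal
    (one_sub_pow_mul_le_of_inv_mul_log_le hκ0 hκ1 ENNReal.toReal_nonneg hε ht)

end Mixing

/-- **Corollary 1.** Let `(M,d)` be a Polish length space of finite diameter, `p ≥ 1`,
`κ ∈ (0,1]`, and let `P` be a Markov transition kernel on `M` with `x ↦ P_x` locally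
`(1-κ)`-Lipschitz into `(Pr_{d,p}(M), W_{d,p})`.  Then `P` has a unique invariant
probability measure `μ⋆`, and `W_{d,p}(μP^t, μ⋆) ≤ ε` for every probability measure `μ`
and every `t ≥ κ⁻¹ ln(diam(M)/ε)`; in particular `τ_{d,p}(ε) ≤ ⌈κ⁻¹ ln(diam(M)/ε)⌉`. -/
theorem contracting_kernel_unique_invariant_and_mixing
    {M : Type*} [MetricSpace M] [CompleteSpace M] [TopologicalSpace.SeparableSpace M]
    [MeasurableSpace M] [BorelSpace M] [Nonempty M]
    (hlen : IsLengthSpace M) (hdiam : EMetric.diam (Set.univ : Set M) ≠ ⊤)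
    (p : ℝ) (hp : 1 ≤ p) (κ : ℝ) (hκ0 : 0 < κ) (hκ1 : κ ≤ 1)
    (P : M → Measure M) (hPmeas : Measurable P)
    (hPprob : ∀ x, IsProbabilityMeasure (P x))
    (hPlip : LocallyLipWith (wassersteinE edist p) (1 - κ) P) :
    ∃ μstar : Measure M, IsProbabilityMeasure μstar ∧ μstar.bind P = μstar ∧
      (∀ ν : Measure M, IsProbabilityMeasure ν → ν.bind P = ν → ν = μstar) ∧
      ∀ ε : ℝ, 0 < ε → ∀ μ : Measure M, IsProbabilityMeasure μ → ∀ t : ℕ,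
        κ⁻¹ * Real.log (Metric.diam (Set.univ : Set M) / ε) ≤ (t : ℝ) →
          wassersteinE edist p (kernelIterate P t μ) μstar ≤ ENNReal.ofReal ε := by
  have : Fact (1 ≤ p) := ⟨hp⟩
  have : SecondCountableTopology M := UniformSpace.secondCountable_of_separable M
  let K : ProbabilityTheory.Kernel M M := ⟨P, hPmeas⟩
  have : ProbabilityTheory.IsMarkovKernel K := ⟨hPprob⟩
  have hcontr : ContractingWith (1 - κ).toNNReal
      (WassersteinSpace.bind K : WassersteinSpace p M → WassersteinSpace p M) :=
    ⟨Real.toNNReal_lt_one.2 (by linarith),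
      WassersteinSpace.lipschitzWith_bind (hlen.lipschitzWith hPlip)⟩
  have hfin (μ ν : WassersteinSpace p M) : edist μ ν ≠ ⊤ :=
    ne_top_of_le_ne_top hdiam (WassersteinSpace.edist_le_ediam μ ν)
  obtain ⟨o⟩ := ‹Nonempty M›
  obtain ⟨μ, hμ, -⟩ := hcontr.exists_fixedPoint ⟨Measure.dirac o⟩ (hfin _ _)
  refine ⟨μ.toMeasure, inferInstance, congrArg WassersteinSpace.toMeasure hμ,
    fun ν _ hν ↦ ?_, fun ε hε ν _ t ht ↦ ?_⟩
  · exact congrArg WassersteinSpace.toMeasure <| (hcontr.eq_or_edist_eq_top_of_fixedPoints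
      (x := ⟨ν⟩) (WassersteinSpace.ext hν) hμ).resolve_right (hfin _ _)
  calc wassersteinE edist p (kernelIterate P t ν) μ.toMeasure
      = edist ((WassersteinSpace.bind K)^[t] ⟨ν⟩) μ := by
        rw [WassersteinSpace.edist_def, ← kernelIterate_eq_iterate_bind]; rfl
    _ ≤ ENNReal.ofReal (1 - κ) ^ t * Metric.ediam (Set.univ : Set M) :=
        edist_iterate_bind_le hcontr.2 hμ ⟨ν⟩ t
    _ ≤ ENNReal.ofReal ε := ofReal_one_sub_pow_mul_le_of_inv_mul_log_le hκ0 hκ1 hdiam hε ht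

end
end

section
/- Let ρ : [0,2π] → ℝ⁺ be a probability density with ρ_min := min_{θ∈[0,2π]} ρ(θ) > 0, and let K^(ρ) be Kac's walk on SO(n) with angle density ρ. Then for every integer n ≥ 2 and every ε > 0, the L² transportation-cost mixing time of K^(ρ) in the intrinsic metric D satisfies τ_{D,2}(ε) ≤ ⌈(n²/(2π·ρ_min)) ln(π√n / ε)⌉; that is, for all probability measures μ on SO(n) and all integers t ≥ (n²/(2π·ρ_min)) ln(π√n/ε), W_{D,2}(μ(K^(ρ))^t, H) ≤ ε, where H is the Haar probability measure on SO(n). -/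
open MeasureTheory ENNReal Filter Topology Matrix

noncomputable section

/-- The (Borel) product measurable structure on matrices. -/
instance matrixMeasurableSpace {m n R : Type*} [MeasurableSpace R] :
    MeasurableSpace (Matrix m n R) :=
  (inferInstance : MeasurableSpace (m → n → R))

/-- A Haar probability measure for the multiplicative set `S`, viewed as a measure on the
ambient space: a probability measure carried by `S` that is invariant under left and right
translations by all elements of `S`. -/
def IsHaarLike {X : Type*} [MeasurableSpace X] [Mul X] (S : Set X) (μ : Measure X) : Prop :=
  IsProbabilityMeasure μ ∧ μ Sᶜ = 0 ∧
    ∀ a ∈ S, μ.map (fun x => a * x) = μ ∧ μ.map (fun x => x * a) = μ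

/-- The Haar probability measure of a compact matrix group `S` (such as `SO(n)` or `U(n)`),
viewed as a measure on the ambient matrix space.  For such `S` a translation-invariant
probability measure exists and is unique, so `haarLike S` is *the* Haar probability
measure of `S`. -/
def haarLike {X : Type*} [MeasurableSpace X] [Mul X] (S : Set X) : Measure X := by
  classical exact if h : ∃ μ, IsHaarLike S μ then h.choose else 0

/-- The set of pairs `1 ≤ i < j ≤ n` of indices. -/
def pairs (n : ℕ) : Finset (Fin n × Fin n) :=
  Finset.univ.filter fun p => p.1 < p.2

/-- The special orthogonal group `SO(n)`, as a subset of the `n × n` real matrices. -/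
def SO (n : ℕ) : Set (Matrix (Fin n) (Fin n) ℝ) :=
  {a | a * aᵀ = 1 ∧ a.det = 1}

/-- The Hilbert–Schmidt (Frobenius) distance `‖a - b‖_hs = √(Tr((a-b)ᵀ(a-b)))` between real
matrices, as an `ℝ≥0∞`-valued distance function. -/
def hsDist {n : ℕ} (a b : Matrix (Fin n) (Fin n) ℝ) : ℝ≥0∞ :=
  ENNReal.ofReal (Real.sqrt (Matrix.trace ((a - b)ᵀ * (a - b))))

/-- The intrinsic (Riemannian/length) metric `D` on `SO(n)` induced by the Hilbert–Schmidt
norm: the infimum of `hs`-lengths of continuous paths inside `SO(n)`. -/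
def DSO (n : ℕ) (a b : Matrix (Fin n) (Fin n) ℝ) : ℝ≥0∞ :=
  intrinsicDistE hsDist (SO n) a b

/-- The rotation `R(i,j,θ)` by the angle `θ` of the plane spanned by the `i`-th and `j`-th
canonical basis vectors: `R e_i = cos θ e_i + sin θ e_j`, `R e_j = cos θ e_j - sin θ e_i`,
and `R e_k = e_k` for `k ∉ {i,j}`. -/
def kacRot {n : ℕ} (i j : Fin n) (θ : ℝ) : Matrix (Fin n) (Fin n) ℝ :=
  Matrix.of fun k l =>
    if k = i ∧ l = i then Real.cos θ
    else if k = j ∧ l = i then Real.sin θ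
    else if k = i ∧ l = j then -Real.sin θ
    else if k = j ∧ l = j then Real.cos θ
    else if k = l then 1 else 0

/-- The measure on angles with density `ρ` with respect to Lebesgue measure on `[0, 2π]`. -/
def angleMeasure (ρ : ℝ → ℝ) : Measure ℝ :=
  (MeasureTheory.volume.restrict (Set.Icc 0 (2 * Real.pi))).withDensity
    fun θ => ENNReal.ofReal (ρ θ)

/-- The transition kernel of Kac's random walk on `SO(n)` with angle density `ρ`:
`K^{(ρ)}_x = (1/C(n,2)) ∑_{1≤i<j≤n} ∫₀^{2π} δ_{R(i,j,θ)·x} ρ(θ) dθ`. -/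
def kacKernelRho (n : ℕ) (ρ : ℝ → ℝ) (x : Matrix (Fin n) (Fin n) ℝ) :
    Measure (Matrix (Fin n) (Fin n) ℝ) :=
  (n.choose 2 : ℝ≥0∞)⁻¹ •
    ∑ p ∈ pairs n, (angleMeasure ρ).map fun θ => kacRot p.1 p.2 θ * x

/-!
The square of the `L²` transportation cost between two laws on `SO(n)` is at most the mean energy of
a random `C¹` curve in `SO(n)` whose endpoints have these laws. One step of the walk multiplies such
a curve by a rotation of a random plane. On the part of the angle law which is uniform, of density
`c = ρ_min` and mass `2πc`, the angle may moreover be shifted along the curve without affecting the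
law of its points, and the right shift cancels the component of the angular velocity in that plane.
These components are orthogonal, so that removing one of them at random multiplies the mean energy
by `1 - 1 / C(n,2)`, and a step of the walk multiplies it by `1 - 2πc / C(n,2)`. Every rotation is
the exponential of a skew-symmetric matrix `A` with `‖A‖² ≤ π²n`, so the initial law can be joined
to the Haar measure, which is stationary, by one-parameter subgroups of energy at most `π²n`.
-/

open scoped Matrix.Norms.Frobenius

-- Preferred to the product topology, with which it agrees, so that calculus and measure theory on
-- matrices refer to the topology of the norm.
instance (priority := high) matrixFrobeniusTopology {m n : Type*} [Fintype m] [Fintype n] :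
    TopologicalSpace (Matrix m n ℝ) :=
  PseudoMetricSpace.toUniformSpace.toTopologicalSpace

section Frobenius

variable {m n : Type*} [Fintype m] [Fintype n]

lemma frobenius_norm_sq (A : Matrix m n ℝ) : ‖A‖ ^ 2 = ∑ i, ∑ j, A i j ^ 2 := by
  have h : 0 ≤ ∑ i, ∑ j, ‖A i j‖ ^ (2 : ℝ) := by positivity
  rw [frobenius_norm_def, ← Real.sqrt_eq_rpow, Real.sq_sqrt h]
  simp

lemma frobenius_norm_sq_eq_trace (A : Matrix m n ℝ) : ‖A‖ ^ 2 = trace (Aᵀ * A) := by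
  rw [frobenius_norm_sq, Finset.sum_comm]
  simp [trace, mul_apply, sq]

lemma frobenius_norm_mul_right [DecidableEq n] (A : Matrix m n ℝ) {U : Matrix n n ℝ}
    (hU : U * Uᵀ = 1) : ‖A * U‖ = ‖A‖ := by
  rw [← sq_eq_sq₀ (norm_nonneg _) (norm_nonneg _), frobenius_norm_sq_eq_trace,
    frobenius_norm_sq_eq_trace, transpose_mul, trace_mul_comm, Matrix.mul_assoc,
    ← Matrix.mul_assoc U, hU, Matrix.one_mul, trace_mul_comm]

lemma frobenius_norm_mul_left [DecidableEq m] {U : Matrix m m ℝ} (hU : Uᵀ * U = 1)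
    (A : Matrix m n ℝ) : ‖U * A‖ = ‖A‖ := by
  rw [← frobenius_norm_transpose, transpose_mul,
    frobenius_norm_mul_right _ (by rwa [transpose_transpose]), frobenius_norm_transpose]

lemma hsDist_eq_edist {n : ℕ} (a b : Matrix (Fin n) (Fin n) ℝ) : hsDist a b = edist a b := by
  rw [hsDist, ← frobenius_norm_sq_eq_trace, Real.sqrt_sq (norm_nonneg _), edist_dist, dist_eq_norm]

end Frobenius

section SpecialOrthogonal

variable {n : ℕ} {a b : Matrix (Fin n) (Fin n) ℝ}

lemma SO_eq_specialOrthogonalGroup (n : ℕ) :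
    SO n = (specialOrthogonalGroup (Fin n) ℝ : Set (Matrix (Fin n) (Fin n) ℝ)) := by
  ext a
  simp [SO, mem_specialOrthogonalGroup_iff, mem_orthogonalGroup_iff]

lemma SO.transpose_mul_self (ha : a ∈ SO n) : aᵀ * a = 1 :=
  mul_eq_one_comm.mp ha.1

lemma SO.mul_mem (ha : a ∈ SO n) (hb : b ∈ SO n) : a * b ∈ SO n := by
  rw [SO_eq_specialOrthogonalGroup] at *
  exact (specialOrthogonalGroup (Fin n) ℝ).mul_mem ha hb

lemma SO.transpose_mem (ha : a ∈ SO n) : aᵀ ∈ SO n :=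
  ⟨by rw [transpose_transpose, SO.transpose_mul_self ha], by rw [det_transpose, ha.2]⟩

lemma mul_self_mem_SO (ha : a * aᵀ = 1) : a * a ∈ SO n := by
  constructor
  · rw [transpose_mul, Matrix.mul_assoc, ← Matrix.mul_assoc a aᵀ, ha, Matrix.one_mul, ha]
  · rw [det_mul, ← congrArg (det a * ·) (det_transpose a), ← det_mul, ha, det_one]

lemma isCompact_SO (n : ℕ) : IsCompact (SO n) := by
  refine Metric.isCompact_of_isClosed_isBounded ?_ ?_
  · have h1 : IsClosed {a : Matrix (Fin n) (Fin n) ℝ | a * aᵀ = 1} :=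
      isClosed_eq (by fun_prop) continuous_const
    have h2 : IsClosed {a : Matrix (Fin n) (Fin n) ℝ | a.det = 1} :=
      isClosed_eq (continuous_id.matrix_det) continuous_const
    exact h1.inter h2
  · refine isBounded_iff_forall_norm_le.mpr ⟨‖(1 : Matrix (Fin n) (Fin n) ℝ)‖, fun a ha => ?_⟩
    rw [← frobenius_norm_mul_right 1 ha.1, Matrix.one_mul]

end SpecialOrthogonal

section KacRotation

variable {n : ℕ} {i j : Fin n}

/-- The infinitesimal generator of the rotations `kacRot i j`. -/
def kacGen (i j : Fin n) : Matrix (Fin n) (Fin n) ℝ :=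
  single j i 1 - single i j 1

lemma kacGen_transpose (i j : Fin n) : (kacGen i j)ᵀ = -kacGen i j := by
  simp [kacGen]

lemma kacGen_mul_self (hij : i ≠ j) :
    kacGen i j * kacGen i j = -(single i i 1 + single j j 1) := by
  simp [kacGen, sub_mul, mul_sub, hij, hij.symm]
  abel

lemma kacGen_mul_kacGen_mul_kacGen (hij : i ≠ j) :
    kacGen i j * (kacGen i j * kacGen i j) = -kacGen i j := by
  rw [kacGen_mul_self hij]
  simp only [kacGen, sub_mul, mul_neg, mul_add, single_mul_single_same, mul_one,
    single_mul_single_of_ne _ _ _ _ hij, single_mul_single_of_ne _ _ _ _ hij.symm]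
  abel

lemma kacRot_eq (hij : i ≠ j) (θ : ℝ) :
    kacRot i j θ = 1 + Real.sin θ • kacGen i j +
      (1 - Real.cos θ) • (kacGen i j * kacGen i j) := by
  rw [kacGen_mul_self hij]
  ext k l
  simp only [kacRot, kacGen, of_apply, Matrix.add_apply, Matrix.sub_apply,
    Matrix.neg_apply, Matrix.smul_apply, smul_eq_mul,
    single_apply, one_apply]
  grind

lemma kacRot_add (hij : i ≠ j) (θ φ : ℝ) :
    kacRot i j (θ + φ) = kacRot i j θ * kacRot i j φ := by
  have h3 := kacGen_mul_kacGen_mul_kacGen hij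
  simp only [kacRot_eq hij, Real.sin_add, Real.cos_add]
  simp only [add_mul, mul_add, smul_mul_assoc, mul_smul_comm, Matrix.mul_assoc, h3, one_mul,
    mul_one, mul_neg]
  module

lemma kacRot_zero (hij : i ≠ j) : kacRot i j 0 = 1 := by
  simp [kacRot_eq hij]

lemma kacRot_transpose (hij : i ≠ j) (θ : ℝ) : (kacRot i j θ)ᵀ = kacRot i j (-θ) := by
  simp [kacRot_eq hij, kacGen_transpose]

lemma kacRot_mem_SO (hij : i ≠ j) (θ : ℝ) : kacRot i j θ ∈ SO n := by
  rw [← add_halves θ, kacRot_add hij]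
  apply mul_self_mem_SO
  rw [kacRot_transpose hij, ← kacRot_add hij, add_neg_cancel, kacRot_zero hij]

lemma kacRot_periodic (i j : Fin n) : Function.Periodic (kacRot i j) (2 * Real.pi) := by
  intro θ
  simp [kacRot]

lemma hasDerivAt_kacRot (hij : i ≠ j) (θ : ℝ) :
    HasDerivAt (kacRot i j) (kacRot i j θ * kacGen i j) θ := by
  have h : HasDerivAt (kacRot i j)
      (Real.cos θ • kacGen i j + Real.sin θ • (kacGen i j * kacGen i j)) θ := by
    rw [funext (kacRot_eq hij)]
    refine ((((Real.hasDerivAt_sin θ).smul_const (kacGen i j)).const_add 1).fun_add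
      (((Real.hasDerivAt_cos θ).const_sub 1).smul_const (kacGen i j * kacGen i j))).congr_deriv ?_
    rw [neg_neg]
  refine h.congr_deriv ?_
  rw [kacRot_eq hij, add_mul, add_mul, one_mul, smul_mul_assoc, smul_mul_assoc, Matrix.mul_assoc,
    kacGen_mul_kacGen_mul_kacGen hij]
  module

lemma contDiff_kacRot (hij : i ≠ j) : ContDiff ℝ 1 (kacRot i j) := by
  rw [funext (kacRot_eq hij)]
  fun_prop

end KacRotation

section Pairs

variable {n : ℕ}

lemma card_pairs (n : ℕ) : (pairs n).card = n.choose 2 := by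
  rw [pairs, Finset.card_filter, Fintype.sum_prod_type_right, Nat.choose_two_right,
    ← Finset.sum_range_id, ← Fin.sum_univ_eq_sum_range (fun i => i)]
  refine Finset.sum_congr rfl fun j _ => ?_
  rw [← Finset.card_filter, ← Fin.card_Iio j]
  congr 1
  ext
  simp

lemma ne_of_mem_pairs {p : Fin n × Fin n} (hp : p ∈ pairs n) : p.1 ≠ p.2 :=
  (Finset.mem_filter.mp hp).2.ne

lemma sum_pairs_add_swap {M : Type*} [AddCommMonoid M] {f : Fin n → Fin n → M}
    (hf : ∀ i, f i i = 0) :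
    ∑ p ∈ pairs n, (f p.1 p.2 + f p.2 p.1) = ∑ i, ∑ j, f i j := by
  have hlt : ∑ p ∈ pairs n, f p.1 p.2 = ∑ i, ∑ j, if i < j then f i j else 0 := by
    rw [pairs, Finset.sum_filter, Fintype.sum_prod_type]
  have hgt : ∑ p ∈ pairs n, f p.2 p.1 = ∑ i, ∑ j, if j < i then f i j else 0 := by
    rw [pairs, Finset.sum_filter, Fintype.sum_prod_type_right]
  rw [Finset.sum_add_distrib, hlt, hgt, ← Finset.sum_add_distrib]
  refine Finset.sum_congr rfl fun i _ => ?_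
  rw [← Finset.sum_add_distrib]
  refine Finset.sum_congr rfl fun j _ => ?_
  rcases lt_trichotomy i j with h | rfl | h
  · simp [h, h.not_gt]
  · simp [hf]
  · simp [h, h.not_gt]

end Pairs

section Skew

variable {n : ℕ} {i j : Fin n} {a : Matrix (Fin n) (Fin n) ℝ}

lemma sum_pairs_sq_of_skew (ha : aᵀ = -a) :
    ∑ p ∈ pairs n, 2 * a p.2 p.1 ^ 2 = ‖a‖ ^ 2 := by
  have hskew (k l : Fin n) : a l k = -a k l := congrFun₂ ha k l
  have hdiag (k : Fin n) : a k k ^ 2 = 0 := by nlinarith [hskew k k]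
  rw [frobenius_norm_sq, ← sum_pairs_add_swap hdiag]
  refine Finset.sum_congr rfl fun p _ => ?_
  rw [hskew p.1 p.2]
  ring

lemma norm_sub_smul_kacGen_sq (hij : i ≠ j) (ha : aᵀ = -a) :
    ‖a - a j i • kacGen i j‖ ^ 2 = ‖a‖ ^ 2 - 2 * a j i ^ 2 := by
  have htrace : trace (a * kacGen i j) = -2 * a j i := by
    have h : a i j = -a j i := congrFun₂ ha j i
    simp [kacGen, mul_sub, trace_mul_single, h]
    ring
  have hgen : trace (kacGen i j * kacGen i j) = -2 := by
    rw [kacGen_mul_self hij]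
    simp
    ring
  have hexpand : trace ((a - a j i • kacGen i j)ᵀ * (a - a j i • kacGen i j)) =
      trace (aᵀ * a) + 2 * a j i * trace (a * kacGen i j) -
        a j i ^ 2 * trace (kacGen i j * kacGen i j) := by
    simp only [transpose_sub, transpose_smul, kacGen_transpose, ha, sub_mul, mul_sub, smul_mul,
      Matrix.mul_smul, neg_mul, trace_sub, trace_smul, trace_neg, smul_eq_mul, smul_neg,
      trace_mul_comm (kacGen i j) a]
    ring
  rw [frobenius_norm_sq_eq_trace, frobenius_norm_sq_eq_trace, hexpand, htrace, hgen]
  ring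

lemma sum_pairs_norm_sub_smul_kacGen_sq (ha : aᵀ = -a) :
    ∑ p ∈ pairs n, ‖a - a p.2 p.1 • kacGen p.1 p.2‖ ^ 2 = (n.choose 2 - 1) * ‖a‖ ^ 2 := by
  rw [Finset.sum_congr rfl fun p hp => norm_sub_smul_kacGen_sq (ne_of_mem_pairs hp) ha,
    Finset.sum_sub_distrib, sum_pairs_sq_of_skew ha, Finset.sum_const, card_pairs, nsmul_eq_mul]
  ring

end Skew

section Curves

lemma sum_setLIntegral_Ioc_castSucc_succ (μ : Measure ℝ) (f : ℝ → ℝ≥0∞) {k : ℕ}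
    {t : Fin (k + 1) → ℝ} (ht : Monotone t) :
    ∑ i : Fin k, ∫⁻ u in Set.Ioc (t i.castSucc) (t i.succ), f u ∂μ =
      ∫⁻ u in Set.Ioc (t 0) (t (Fin.last k)), f u ∂μ := by
  induction k with
  | zero => simp
  | succ k ih =>
    have hinit := ih (ht.comp Fin.strictMono_castSucc.monotone)
    simp only [Function.comp_apply, ← Fin.succ_castSucc, Fin.castSucc_zero] at hinit
    rw [Fin.sum_univ_castSucc, hinit, Fin.succ_last,
      ← lintegral_union measurableSet_Ioc (Set.Ioc_disjoint_Ioc_of_le le_rfl),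
      Set.Ioc_union_Ioc_eq_Ioc (ht (Fin.zero_le _)) (ht (Fin.le_last _))]

lemma sq_lintegral_enorm_le {α E : Type*} [NormedAddCommGroup E] [MeasurableSpace α] {μ : Measure α}
    [IsProbabilityMeasure μ] {f : α → E} (hf : AEStronglyMeasurable f μ) :
    (∫⁻ x, ‖f x‖ₑ ∂μ) ^ 2 ≤ ∫⁻ x, ‖f x‖ₑ ^ 2 ∂μ := by
  have h := eLpNorm_le_eLpNorm_of_exponent_le one_le_two hf
  rw [eLpNorm_one_eq_lintegral_enorm,
    eLpNorm_eq_lintegral_rpow_enorm_toReal two_ne_zero ofNat_ne_top] at h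
  simp only [toReal_ofNat, ENNReal.rpow_ofNat] at h
  refine (pow_le_pow_left' h 2).trans_eq ?_
  rw [← ENNReal.rpow_natCast, ← ENNReal.rpow_mul]
  norm_num

variable {E : Type*} [NormedAddCommGroup E] [NormedSpace ℝ E] {γ : ℝ → E}

/-- The energy `∫₀¹ ‖γ'‖²` of a curve, with values in `ℝ≥0∞` so that no integrability has to be
assumed. -/
def energy (γ : ℝ → E) : ℝ≥0∞ :=
  ∫⁻ u in Set.Ioc 0 1, ‖deriv γ u‖ₑ ^ 2

lemma pathLengthE_edist_le_lintegral [CompleteSpace E] (hγ : ContDiff ℝ 1 γ) :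
    pathLengthE edist γ ≤ ∫⁻ u in Set.Ioc 0 1, ‖deriv γ u‖ₑ := by
  refine iSup_le fun k => iSup_le fun t => iSup_le fun ht => iSup_le fun h0 => iSup_le fun h1 => ?_
  calc ∑ i : Fin k, edist (γ (t i.castSucc)) (γ (t i.succ))
      ≤ ∑ i : Fin k, ∫⁻ u in Set.Ioc (t i.castSucc) (t i.succ), ‖deriv γ u‖ₑ := by
        refine Finset.sum_le_sum fun i _ => ?_
        rw [edist_comm, edist_eq_enorm_sub, restrict_Ioc_eq_restrict_Icc]
        exact enorm_sub_le_lintegral_deriv_of_contDiffOn_Icc hγ.contDiffOn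
          (ht i.castSucc_lt_succ.le)
    _ = ∫⁻ u in Set.Ioc 0 1, ‖deriv γ u‖ₑ := by
        rw [sum_setLIntegral_Ioc_castSucc_succ volume _ ht, h0, h1]

lemma pathLengthE_edist_sq_le_energy [CompleteSpace E] (hγ : ContDiff ℝ 1 γ) :
    pathLengthE edist γ ^ 2 ≤ energy γ := by
  have : IsProbabilityMeasure (volume.restrict (Set.Ioc (0 : ℝ) 1)) := ⟨by simp⟩
  exact (pow_le_pow_left' (pathLengthE_edist_le_lintegral hγ) 2).trans
    (sq_lintegral_enorm_le (hγ.continuous_deriv le_rfl).aestronglyMeasurable)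

end Curves

section SOPath

/-- A `C¹` curve in `SO(n)`. It is defined on the whole line for convenience; only its
restriction to `[0, 1]` matters. -/
structure IsSOPath {n : ℕ} (γ : ℝ → Matrix (Fin n) (Fin n) ℝ) : Prop where
  contDiff : ContDiff ℝ 1 γ
  mem (u : ℝ) : γ u ∈ SO n

/-- The velocity of a curve of matrices, translated on the right to the identity. -/
def angularVelocity {n : ℕ} (γ : ℝ → Matrix (Fin n) (Fin n) ℝ) (u : ℝ) :
    Matrix (Fin n) (Fin n) ℝ :=
  deriv γ u * (γ u)ᵀ

variable {n : ℕ} {γ : ℝ → Matrix (Fin n) (Fin n) ℝ}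

lemma IsSOPath.DSO_sq_le_energy (hγ : IsSOPath γ) : DSO n (γ 0) (γ 1) ^ 2 ≤ energy γ := by
  have hlength : DSO n (γ 0) (γ 1) ≤ pathLengthE edist γ := by
    have hedist : (hsDist : Matrix (Fin n) (Fin n) ℝ → _ → ℝ≥0∞) = edist :=
      funext₂ hsDist_eq_edist
    rw [← hedist]
    exact iInf_le_of_le γ <| iInf_le_of_le hγ.contDiff.continuous.continuousOn <|
      iInf_le_of_le (fun u _ => hγ.mem u) <| iInf_le_of_le rfl <| iInf_le_of_le rfl le_rfl
  exact (pow_le_pow_left' hlength 2).trans (pathLengthE_edist_sq_le_energy hγ.contDiff)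

lemma IsSOPath.norm_angularVelocity (hγ : IsSOPath γ) (u : ℝ) :
    ‖angularVelocity γ u‖ = ‖deriv γ u‖ :=
  frobenius_norm_mul_right _ (SO.transpose_mem (hγ.mem u)).1

lemma IsSOPath.continuous_angularVelocity (hγ : IsSOPath γ) : Continuous (angularVelocity γ) :=
  (hγ.contDiff.continuous_deriv le_rfl).matrix_mul hγ.contDiff.continuous.matrix_transpose

lemma IsSOPath.hasDerivAt (hγ : IsSOPath γ) (u : ℝ) :
    HasDerivAt γ (angularVelocity γ u * γ u) u := by
  rw [angularVelocity, Matrix.mul_assoc, SO.transpose_mul_self (hγ.mem u), Matrix.mul_one]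
  exact (hγ.contDiff.differentiable one_ne_zero u).hasDerivAt

lemma IsSOPath.transpose_angularVelocity (hγ : IsSOPath γ) (u : ℝ) :
    (angularVelocity γ u)ᵀ = -angularVelocity γ u := by
  have hd := (hγ.contDiff.differentiable one_ne_zero u).hasDerivAt
  have hconst : HasDerivAt (fun v => γ v * star (γ v)) 0 u := by
    simp only [star_eq_conjTranspose, conjTranspose_eq_transpose_of_trivial, (hγ.mem _).1]
    exact hasDerivAt_const u 1
  have h : deriv γ u * (γ u)ᵀ + γ u * (deriv γ u)ᵀ = 0 := (hd.fun_mul hd.star).unique hconst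
  rw [angularVelocity, transpose_mul, transpose_transpose]
  exact (neg_eq_of_add_eq_zero_right h).symm

end SOPath

section Measurability

instance matrixBorelSpace {m n : Type*} [Fintype m] [Fintype n] :
    BorelSpace (Matrix m n ℝ) :=
  inferInstanceAs (BorelSpace (m → n → ℝ))

instance matrixSecondCountableTopology {m n : Type*} [Fintype m] [Fintype n] :
    SecondCountableTopology (Matrix m n ℝ) :=
  inferInstanceAs (SecondCountableTopology (m → n → ℝ))

variable {Ω E : Type*} [MeasurableSpace Ω]

lemma measurable_deriv_of_measurable_uncurry [NormedAddCommGroup E] [NormedSpace ℝ E]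
    [MeasurableSpace E] [BorelSpace E] [SecondCountableTopology E] {γ : Ω → ℝ → E}
    (hγ : Measurable (Function.uncurry γ)) (hd : ∀ ω, Differentiable ℝ (γ ω)) :
    Measurable fun z : Ω × ℝ => deriv (γ z.1) z.2 := by
  have hstep : Tendsto (fun k : ℕ => 1 / ((k : ℝ) + 1)) atTop (𝓝[≠] 0) :=
    tendsto_nhdsWithin_iff.mpr ⟨tendsto_one_div_add_atTop_nhds_zero_nat,
      .of_forall fun k => Nat.one_div_pos_of_nat.ne'⟩
  refine measurable_of_tendsto_metrizable (f := fun (k : ℕ) (z : Ω × ℝ) =>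
    (1 / ((k : ℝ) + 1))⁻¹ • (γ z.1 (z.2 + 1 / ((k : ℝ) + 1)) - γ z.1 z.2)) (fun k => ?_) ?_
  · have hshift : Measurable fun z : Ω × ℝ => γ z.1 (z.2 + 1 / ((k : ℝ) + 1)) :=
      hγ.comp (measurable_fst.prodMk (measurable_snd.add_const _))
    exact (hshift.sub hγ).const_smul _
  · exact tendsto_pi_nhds.mpr fun z => (hd z.1 z.2).hasDerivAt.tendsto_slope_zero.comp hstep

lemma measurable_intervalIntegral_of_measurable_uncurry {f : Ω → ℝ → ℝ}
    (hf : Measurable (Function.uncurry f)) :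
    Measurable fun z : Ω × ℝ => ∫ v in (0 : ℝ)..z.2, f z.1 v := by
  have hrescale (z : Ω × ℝ) :
      ∫ v in (0 : ℝ)..z.2, f z.1 v = z.2 * ∫ s in Set.Ioc 0 1, f z.1 (z.2 * s) := by
    rw [← intervalIntegral.integral_of_le zero_le_one, intervalIntegral.mul_integral_comp_mul_left,
      mul_zero, mul_one]
  have hcomp : Measurable fun w : (Ω × ℝ) × ℝ => f w.1.1 (w.1.2 * w.2) :=
    hf.comp (measurable_fst.fst.prodMk (measurable_fst.snd.mul measurable_snd))
  simp only [hrescale]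
  exact measurable_snd.mul hcomp.stronglyMeasurable.integral_prod_right'.measurable

end Measurability

section AngleLaw

lemma setLIntegral_sub_of_periodic {f : ℝ → ℝ≥0∞} {T : ℝ} (hT : 0 < T)
    (hf : Function.Periodic f T) (s : ℝ) :
    ∫⁻ θ in Set.Icc 0 T, f (θ - s) = ∫⁻ θ in Set.Icc 0 T, f θ := by
  rw [← restrict_Ioc_eq_restrict_Icc]
  calc ∫⁻ θ in Set.Ioc 0 T, f (θ - s)
      = ∫⁻ θ in Set.Ioc (-s) (-s + T), f θ := by
        rw [← (measurePreserving_sub_right volume s).setLIntegral_comp_preimage_emb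
          (MeasurableEquiv.subRight s).measurableEmbedding f]
        simp
    _ = ∫⁻ θ in Set.Ioc 0 (0 + T), f θ :=
        (isAddFundamentalDomain_Ioc hT (-s) volume).setLIntegral_eq
          (isAddFundamentalDomain_Ioc hT 0 volume) f hf.map_vadd_zmultiples
    _ = ∫⁻ θ in Set.Ioc 0 T, f θ := by rw [zero_add]

/-- The measure of constant density `c` on the angles `[0, 2π]`. It is the shift-invariant part of
the laws of the angle that dominate it. -/
def uniformAngle (c : ℝ) : Measure ℝ :=
  ENNReal.ofReal c • volume.restrict (Set.Icc 0 (2 * Real.pi))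

instance isFiniteMeasure_uniformAngle (c : ℝ) : IsFiniteMeasure (uniformAngle c) :=
  Measure.smul_finite _ ofReal_ne_top

lemma uniformAngle_univ {c : ℝ} (hc : 0 ≤ c) :
    uniformAngle c Set.univ = ENNReal.ofReal (2 * Real.pi * c) := by
  simp [uniformAngle, ← ENNReal.ofReal_mul hc, mul_comm]

/-- The law `ν` of the angle, marked by `true` on its part `uniformAngle c` and by `false` on the
rest. -/
def markedAngle (c : ℝ) (ν : Measure ℝ) : Measure (ℝ × Bool) :=
  (uniformAngle c).map (·, true) + (ν - uniformAngle c).map (·, false)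

variable {c : ℝ} {ν : Measure ℝ}

lemma lintegral_markedAngle {f : ℝ × Bool → ℝ≥0∞} (hf : Measurable f) :
    ∫⁻ z, f z ∂markedAngle c ν =
      ∫⁻ θ, f (θ, true) ∂uniformAngle c + ∫⁻ θ, f (θ, false) ∂(ν - uniformAngle c) := by
  rw [markedAngle, lintegral_add_measure, lintegral_map hf measurable_prodMk_right,
    lintegral_map hf measurable_prodMk_right]

lemma lintegral_markedAngle_sub_cond (hν : uniformAngle c ≤ ν) {f : ℝ → ℝ≥0∞} (hf : Measurable f)
    (hper : Function.Periodic f (2 * Real.pi)) (s : ℝ) :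
    ∫⁻ z, f (z.1 - cond z.2 s 0) ∂markedAngle c ν = ∫⁻ θ, f θ ∂ν := by
  have hmeas : Measurable fun z : ℝ × Bool => f (z.1 - cond z.2 s 0) :=
    hf.comp (measurable_fst.sub
      ((measurable_of_countable fun b => cond b s 0).comp measurable_snd))
  have huniform : ∫⁻ θ, f (θ - s) ∂uniformAngle c = ∫⁻ θ, f θ ∂uniformAngle c := by
    simp only [uniformAngle, lintegral_smul_measure,
      setLIntegral_sub_of_periodic Real.two_pi_pos hper]
  simp only [lintegral_markedAngle hmeas, cond_true, cond_false, sub_zero]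
  rw [huniform, ← lintegral_add_measure, add_comm, Measure.sub_add_cancel_of_le hν]

lemma lintegral_markedAngle_snd [IsProbabilityMeasure ν] (hν : uniformAngle c ≤ ν)
    (f : Bool → ℝ≥0∞) :
    ∫⁻ z, f z.2 ∂markedAngle c ν =
      uniformAngle c Set.univ * f true + (1 - uniformAngle c Set.univ) * f false := by
  rw [lintegral_markedAngle (f := fun z => f z.2) ((measurable_of_countable f).comp measurable_snd)]
  simp [mul_comm, Measure.sub_apply MeasurableSet.univ hν]

lemma isProbabilityMeasure_markedAngle [IsProbabilityMeasure ν] (hν : uniformAngle c ≤ ν) :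
    IsProbabilityMeasure (markedAngle c ν) := by
  have h := lintegral_markedAngle_sub_cond hν (measurable_const (a := 1)) (fun _ => rfl) 0
  exact ⟨by simpa using h⟩

end AngleLaw

section Kernel

/-- The transition kernel of Kac's walk on `SO(n)` with angle law `ν`. -/
def kacKernel (n : ℕ) (ν : Measure ℝ) (x : Matrix (Fin n) (Fin n) ℝ) :
    Measure (Matrix (Fin n) (Fin n) ℝ) :=
  (n.choose 2 : ℝ≥0∞)⁻¹ • ∑ p ∈ pairs n, ν.map fun θ => kacRot p.1 p.2 θ * x

variable {n : ℕ} {ν : Measure ℝ} {f : Matrix (Fin n) (Fin n) ℝ → ℝ≥0∞}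

lemma measurable_kacRot (i j : Fin n) : Measurable (kacRot i j) := by
  refine measurable_pi_iff.2 fun k => measurable_pi_iff.2 fun l => ?_
  simp only [kacRot, of_apply]
  split_ifs <;> fun_prop

lemma lintegral_kacKernel (hf : Measurable f) (x : Matrix (Fin n) (Fin n) ℝ) :
    ∫⁻ y, f y ∂kacKernel n ν x =
      (n.choose 2 : ℝ≥0∞)⁻¹ * ∑ p ∈ pairs n, ∫⁻ θ, f (kacRot p.1 p.2 θ * x) ∂ν := by
  rw [kacKernel, lintegral_smul_measure, lintegral_finsetSum_measure, smul_eq_mul]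
  simp only [lintegral_map hf ((measurable_kacRot _ _).mul_const x)]

lemma measurable_kacKernel [SFinite ν] : Measurable (kacKernel n ν) := by
  refine Measure.measurable_of_measurable_coe _ fun s hs => ?_
  have hs1 : Measurable (s.indicator (1 : Matrix (Fin n) (Fin n) ℝ → ℝ≥0∞)) :=
    measurable_one.indicator hs
  simp_rw [← lintegral_indicator_one hs, lintegral_kacKernel hs1]
  refine (Finset.measurable_fun_sum _ fun p _ =>
    Measurable.lintegral_prod_right' (ν := ν)
      (f := fun z => s.indicator 1 (kacRot p.1 p.2 z.2 * z.1)) ?_).const_mul _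
  exact hs1.comp (((measurable_kacRot p.1 p.2).comp measurable_snd).mul measurable_fst)

end Kernel

section Coupling

/-- A random `C¹` curve in `SO(n)`, jointly measurable in the randomness and in time. -/
structure IsRandomSOPath {n : ℕ} {Ω : Type*} [MeasurableSpace Ω]
    (γ : Ω → ℝ → Matrix (Fin n) (Fin n) ℝ) : Prop where
  measurable : Measurable (Function.uncurry γ)
  isSOPath (ω : Ω) : IsSOPath (γ ω)

/-- `μ` and `ν` are the laws of the two endpoints of a random curve in `SO(n)` of mean energy at
most `e`. -/
def PathCoupled {n : ℕ} (μ ν : Measure (Matrix (Fin n) (Fin n) ℝ)) (e : ℝ≥0∞) : Prop :=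
  ∃ (Ω : Type) (_ : MeasurableSpace Ω) (P : Measure Ω) (γ : Ω → ℝ → Matrix (Fin n) (Fin n) ℝ),
    IsProbabilityMeasure P ∧ IsRandomSOPath γ ∧ P.map (γ · 0) = μ ∧ P.map (γ · 1) = ν ∧
      ∫⁻ ω, energy (γ ω) ∂P ≤ e

variable {n : ℕ}

section RandomPath

variable {Ω : Type*} [MeasurableSpace Ω] {γ : Ω → ℝ → Matrix (Fin n) (Fin n) ℝ}

lemma IsRandomSOPath.measurable_eval (hγ : IsRandomSOPath γ) (u : ℝ) : Measurable (γ · u) :=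
  hγ.measurable.of_uncurry_right

lemma IsRandomSOPath.measurable_deriv (hγ : IsRandomSOPath γ) :
    Measurable fun z : Ω × ℝ => deriv (γ z.1) z.2 :=
  measurable_deriv_of_measurable_uncurry hγ.measurable fun ω =>
    (hγ.isSOPath ω).contDiff.differentiable one_ne_zero

lemma IsRandomSOPath.measurable_energy (hγ : IsRandomSOPath γ) :
    Measurable fun ω => energy (γ ω) :=
  (hγ.measurable_deriv.enorm.pow_const 2).lintegral_prod_right'

lemma IsRandomSOPath.measurable_angularVelocity (hγ : IsRandomSOPath γ) :
    Measurable fun z : Ω × ℝ => angularVelocity (γ z.1) z.2 := by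
  have htranspose : Continuous fun a : Matrix (Fin n) (Fin n) ℝ => aᵀ :=
    continuous_id.matrix_transpose
  exact hγ.measurable_deriv.mul (htranspose.measurable.comp hγ.measurable)

end RandomPath

variable {μ ν : Measure (Matrix (Fin n) (Fin n) ℝ)} {e : ℝ≥0∞}

lemma PathCoupled.wassersteinE_le (h : PathCoupled μ ν e) :
    wassersteinE (DSO n) 2 μ ν ≤ e ^ (1 / 2 : ℝ) := by
  obtain ⟨Ω, _, P, γ, _, hγ, rfl, rfl, he⟩ := h
  have hpair : Measurable fun ω => (γ ω 0, γ ω 1) :=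
    (hγ.measurable_eval 0).prodMk (hγ.measurable_eval 1)
  have hcoupling : IsCoupling (P.map fun ω => (γ ω 0, γ ω 1)) (P.map (γ · 0)) (P.map (γ · 1)) :=
    ⟨Measure.map_map measurable_fst hpair, Measure.map_map measurable_snd hpair⟩
  have hcost : ∫⁻ z, DSO n z.1 z.2 ^ (2 : ℝ) ∂(P.map fun ω => (γ ω 0, γ ω 1)) ≤ e := by
    refine (lintegral_map_le _ _).trans (le_trans (lintegral_mono fun ω => ?_) he)
    rw [ENNReal.rpow_two]
    exact (hγ.isSOPath ω).DSO_sq_le_energy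
  exact iInf₂_le_of_le _ hcoupling (ENNReal.rpow_le_rpow hcost (by norm_num))

end Coupling

section Step

variable {n : ℕ}

/-- The amount by which a marked angle is shifted at time `u`, so as to cancel the component of the
angular velocity of `γ` in the plane of the pair `p`. -/
def angleShift (γ : ℝ → Matrix (Fin n) (Fin n) ℝ) (p : Fin n × Fin n) (b : Bool) (u : ℝ) : ℝ :=
  cond b (∫ v in (0 : ℝ)..u, angularVelocity γ v p.2 p.1) 0

/-- The curve obtained from `γ` by one step of the walk in the plane of the pair `p` with marked
angle `z`. -/
def stepPath (γ : ℝ → Matrix (Fin n) (Fin n) ℝ) (p : Fin n × Fin n) (z : ℝ × Bool) (u : ℝ) :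
    Matrix (Fin n) (Fin n) ℝ :=
  kacRot p.1 p.2 (z.1 - angleShift γ p z.2 u) * γ u

variable {γ : ℝ → Matrix (Fin n) (Fin n) ℝ} {p : Fin n × Fin n}

lemma IsSOPath.continuous_angularVelocity_apply (hγ : IsSOPath γ) (i j : Fin n) :
    Continuous fun u => angularVelocity γ u i j :=
  hγ.continuous_angularVelocity.matrix_elem i j

lemma IsSOPath.hasDerivAt_angleShift (hγ : IsSOPath γ) (p : Fin n × Fin n) (b : Bool) (u : ℝ) :
    HasDerivAt (angleShift γ p b) (cond b (angularVelocity γ u p.2 p.1) 0) u := by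
  cases b
  · exact hasDerivAt_const u 0
  · exact ((hγ.continuous_angularVelocity_apply p.2 p.1).integral_hasStrictDerivAt 0 u).hasDerivAt

lemma IsSOPath.hasDerivAt_stepPath (hγ : IsSOPath γ) (hp : p.1 ≠ p.2) (z : ℝ × Bool) (u : ℝ) :
    HasDerivAt (stepPath γ p z)
      (kacRot p.1 p.2 (z.1 - angleShift γ p z.2 u) *
        (angularVelocity γ u - cond z.2 (angularVelocity γ u p.2 p.1) 0 • kacGen p.1 p.2) *
        γ u) u := by
  have hrot := (hasDerivAt_kacRot hp _).scomp u ((hγ.hasDerivAt_angleShift p z.2 u).const_sub z.1)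
  refine (hrot.fun_mul (hγ.hasDerivAt u)).congr_deriv ?_
  simp only [Function.comp_apply, mul_sub, sub_mul, smul_mul_assoc, mul_smul_comm, neg_smul,
    neg_mul, Matrix.mul_assoc]
  abel

lemma IsSOPath.isSOPath_stepPath (hγ : IsSOPath γ) (hp : p.1 ≠ p.2) (z : ℝ × Bool) :
    IsSOPath (stepPath γ p z) where
  contDiff := by
    have hshift : ContDiff ℝ 1 (angleShift γ p z.2) := by
      refine contDiff_one_iff_deriv.2
        ⟨fun u => (hγ.hasDerivAt_angleShift p z.2 u).differentiableAt, ?_⟩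
      rw [funext fun u => (hγ.hasDerivAt_angleShift p z.2 u).deriv]
      cases z.2
      · exact continuous_const
      · exact hγ.continuous_angularVelocity_apply p.2 p.1
    exact ((contDiff_kacRot hp).comp (contDiff_const.sub hshift)).mul hγ.contDiff
  mem u := SO.mul_mem (kacRot_mem_SO hp _) (hγ.mem u)

lemma IsSOPath.norm_deriv_stepPath (hγ : IsSOPath γ) (hp : p.1 ≠ p.2) (z : ℝ × Bool) (u : ℝ) :
    ‖deriv (stepPath γ p z) u‖ =
      ‖angularVelocity γ u - cond z.2 (angularVelocity γ u p.2 p.1) 0 • kacGen p.1 p.2‖ := by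
  rw [(hγ.hasDerivAt_stepPath hp z u).deriv, frobenius_norm_mul_right _ (hγ.mem u).1,
    frobenius_norm_mul_left (SO.transpose_mul_self (kacRot_mem_SO hp _))]

lemma IsSOPath.energy_stepPath_congr (hγ : IsSOPath γ) (hp : p.1 ≠ p.2) (θ θ' : ℝ) (b : Bool) :
    energy (stepPath γ p (θ, b)) = energy (stepPath γ p (θ', b)) := by
  simp only [energy, ← ofReal_norm, hγ.norm_deriv_stepPath hp]

lemma IsSOPath.energy_stepPath_false (hγ : IsSOPath γ) (hp : p.1 ≠ p.2) (θ : ℝ) :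
    energy (stepPath γ p (θ, false)) = energy γ := by
  have hspeed (u : ℝ) : ‖deriv (stepPath γ p (θ, false)) u‖ₑ = ‖deriv γ u‖ₑ := by
    rw [← ofReal_norm, ← ofReal_norm, hγ.norm_deriv_stepPath hp,
      ← hγ.norm_angularVelocity]
    simp
  simp only [energy, hspeed]

lemma IsSOPath.sum_energy_stepPath_true (hγ : IsSOPath γ) (θ : ℝ) :
    ∑ p ∈ pairs n, energy (stepPath γ p (θ, true)) =
      (n.choose 2 - 1 : ℝ≥0∞) * energy γ := by
  have hspeed (u : ℝ) : ∑ p ∈ pairs n, ‖deriv (stepPath γ p (θ, true)) u‖ₑ ^ 2 =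
      (n.choose 2 - 1 : ℝ≥0∞) * ‖deriv γ u‖ₑ ^ 2 := by
    have hnorm (p) (hp : p ∈ pairs n) : ‖deriv (stepPath γ p (θ, true)) u‖ =
        ‖angularVelocity γ u - angularVelocity γ u p.2 p.1 • kacGen p.1 p.2‖ :=
      hγ.norm_deriv_stepPath (ne_of_mem_pairs hp) _ u
    have h := sum_pairs_norm_sub_smul_kacGen_sq (hγ.transpose_angularVelocity u)
    simp only [← ofReal_norm, ← ENNReal.ofReal_pow (norm_nonneg _)]
    rw [← ENNReal.ofReal_sum_of_nonneg fun _ _ => sq_nonneg _, ← hγ.norm_angularVelocity,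
      Finset.sum_congr rfl fun p hp => by rw [hnorm p hp], h,
      ENNReal.ofReal_mul' (sq_nonneg _), ENNReal.ofReal_sub _ zero_le_one, ENNReal.ofReal_natCast,
      ENNReal.ofReal_one]
  have hmeas (p) (hp : p ∈ pairs n) :
      Measurable fun u => ‖deriv (stepPath γ p (θ, true)) u‖ₑ ^ 2 :=
    ((hγ.isSOPath_stepPath (ne_of_mem_pairs hp) _).contDiff.continuous_deriv
      le_rfl).enorm.measurable.pow_const 2
  simp only [energy]
  rw [← lintegral_finsetSum _ hmeas, ← lintegral_const_mul _
    ((hγ.contDiff.continuous_deriv le_rfl).enorm.measurable.pow_const 2)]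
  simp only [hspeed]

variable {Ω : Type*} [MeasurableSpace Ω] {γ : Ω → ℝ → Matrix (Fin n) (Fin n) ℝ}

lemma IsRandomSOPath.measurable_angleShift (hγ : IsRandomSOPath γ) (p : Fin n × Fin n) (b : Bool) :
    Measurable fun z : Ω × ℝ => angleShift (γ z.1) p b z.2 := by
  cases b
  · exact measurable_const
  · exact measurable_intervalIntegral_of_measurable_uncurry
      (f := fun ω v => angularVelocity (γ ω) v p.2 p.1)
      (hγ.measurable_angularVelocity.eval.eval)

lemma IsRandomSOPath.isRandomSOPath_stepPath (hγ : IsRandomSOPath γ) :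
    IsRandomSOPath fun (w : Ω × pairs n × ℝ × Bool) => stepPath (γ w.1) w.2.1 w.2.2 where
  measurable := by
    have hfixed (x : pairs n × Bool) : Measurable fun (w : (Ω × ℝ) × ℝ) =>
        stepPath (γ w.1.1) x.1 (w.2, x.2) w.1.2 :=
      ((measurable_kacRot _ _).comp (measurable_snd.sub
        ((hγ.measurable_angleShift x.1 x.2).comp measurable_fst))).mul
        (hγ.measurable.comp measurable_fst)
    have hjoint : Measurable fun (w : (pairs n × Bool) × (Ω × ℝ) × ℝ) =>
        stepPath (γ w.2.1.1) w.1.1 (w.2.2, w.1.2) w.2.1.2 :=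
      measurable_from_prod_countable_right hfixed
    have hreorder : Measurable fun w : (Ω × pairs n × ℝ × Bool) × ℝ =>
        ((w.1.2.1, w.1.2.2.2), (w.1.1, w.2), w.1.2.2.1) := by fun_prop
    simpa only [Function.comp_def, Function.uncurry_def, Prod.mk.eta] using hjoint.comp hreorder
  isSOPath w := (hγ.isSOPath w.1).isSOPath_stepPath (ne_of_mem_pairs w.2.1.2) w.2.2

/-- The law of the plane and of the marked angle used in one step of the walk. -/
def stepLaw (n : ℕ) (c : ℝ) (ν : Measure ℝ) : Measure (pairs n × ℝ × Bool) :=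
  ((n.choose 2 : ℝ≥0∞)⁻¹ • Measure.count).prod (markedAngle c ν)

variable {c : ℝ} {ν : Measure ℝ} [IsProbabilityMeasure ν]

lemma lintegral_stepLaw (hν : uniformAngle c ≤ ν) {f : pairs n × ℝ × Bool → ℝ≥0∞}
    (hf : Measurable f) :
    ∫⁻ w, f w ∂stepLaw n c ν =
      (n.choose 2 : ℝ≥0∞)⁻¹ * ∑ p : pairs n, ∫⁻ z, f (p, z) ∂markedAngle c ν := by
  have := isProbabilityMeasure_markedAngle hν
  rw [stepLaw, lintegral_prod _ hf.aemeasurable, lintegral_smul_measure, lintegral_count,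
    tsum_fintype, smul_eq_mul]

lemma isProbabilityMeasure_stepLaw (hn : 2 ≤ n) (hν : uniformAngle c ≤ ν) :
    IsProbabilityMeasure (stepLaw n c ν) := by
  have := isProbabilityMeasure_markedAngle hν
  have hN : (n.choose 2 : ℝ≥0∞) ≠ 0 := Nat.cast_ne_zero.2 (Nat.choose_pos hn).ne'
  constructor
  rw [← lintegral_one, lintegral_stepLaw hν measurable_const]
  simp [card_pairs, ENNReal.inv_mul_cancel hN (natCast_ne_top _)]

-- Shifting the angle by a quantity independent of it does not change the law of a step.
lemma lintegral_stepPath_stepLaw (hν : uniformAngle c ≤ ν)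
    (γ : ℝ → Matrix (Fin n) (Fin n) ℝ) (u : ℝ) {f : Matrix (Fin n) (Fin n) ℝ → ℝ≥0∞}
    (hf : Measurable f) (hγ : Measurable fun w : pairs n × ℝ × Bool => stepPath γ w.1 w.2 u) :
    ∫⁻ w, f (stepPath γ w.1 w.2 u) ∂stepLaw n c ν = ∫⁻ y, f y ∂kacKernel n ν (γ u) := by
  have hrot (p : pairs n) :
      ∫⁻ z, f (stepPath γ p z u) ∂markedAngle c ν =
        ∫⁻ θ, f (kacRot p.1.1 p.1.2 θ * γ u) ∂ν := by
    rw [← lintegral_markedAngle_sub_cond (f := fun θ => f (kacRot p.1.1 p.1.2 θ * γ u)) hν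
      (hf.comp ((measurable_kacRot _ _).mul_const (γ u)))
      (fun θ => by simp only [kacRot_periodic _ _ θ]) (angleShift γ p true u)]
    refine lintegral_congr fun z => ?_
    rcases z with ⟨θ, _ | _⟩ <;> simp [stepPath, angleShift]
  have hfγ : Measurable fun w : pairs n × ℝ × Bool => f (stepPath γ w.1 w.2 u) := hf.comp hγ
  rw [lintegral_stepLaw hν hfγ, lintegral_kacKernel hf]
  simp only [hrot]
  exact congrArg _ (Finset.sum_coe_sort (pairs n) fun p => ∫⁻ θ, f (kacRot p.1 p.2 θ * γ u) ∂ν)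

end Step

section Contraction

variable {n : ℕ} {c : ℝ} {ν : Measure ℝ} [IsProbabilityMeasure ν]

lemma two_pi_mul_le_one (hc : 0 ≤ c) (hν : uniformAngle c ≤ ν) : 2 * Real.pi * c ≤ 1 := by
  rw [← ENNReal.ofReal_le_one, ← uniformAngle_univ hc, ← measure_univ (μ := ν)]
  exact hν Set.univ

lemma ofReal_contraction_factor {q : ℝ} (hq0 : 0 ≤ q) (hq1 : q ≤ 1) {N : ℕ} (hN : 0 < N) :
    (N : ℝ≥0∞)⁻¹ * (ENNReal.ofReal q * (N - 1) + (1 - ENNReal.ofReal q) * N) =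
      ENNReal.ofReal (1 - q / N) := by
  have hN1 : (1 : ℝ) ≤ N := Nat.one_le_cast.2 hN
  have hN0 : (0 : ℝ) < N := by positivity
  have h1 : (1 : ℝ≥0∞) = ENNReal.ofReal 1 := ENNReal.ofReal_one.symm
  rw [← ENNReal.ofReal_natCast N, h1, ← ENNReal.ofReal_inv_of_pos hN0,
    ← ENNReal.ofReal_sub _ zero_le_one, ← ENNReal.ofReal_sub _ hq0, ← ENNReal.ofReal_mul hq0,
    ← ENNReal.ofReal_mul (sub_nonneg.2 hq1), ← ENNReal.ofReal_add, ← ENNReal.ofReal_mul]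
  · congr 1
    field_simp
    ring
  · positivity
  · exact mul_nonneg hq0 (sub_nonneg.2 hN1)
  · exact mul_nonneg (sub_nonneg.2 hq1) hN0.le

lemma IsSOPath.lintegral_energy_stepPath {γ : ℝ → Matrix (Fin n) (Fin n) ℝ} (hγ : IsSOPath γ)
    (hn : 2 ≤ n) (hc : 0 ≤ c) (hν : uniformAngle c ≤ ν) :
    ∫⁻ w, energy (stepPath γ w.1 w.2) ∂stepLaw n c ν =
      ENNReal.ofReal (1 - 2 * Real.pi * c / n.choose 2) * energy γ := by
  have hangle (w : pairs n × ℝ × Bool) :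
      energy (stepPath γ w.1 w.2) = energy (stepPath γ w.1 (0, w.2.2)) :=
    hγ.energy_stepPath_congr (ne_of_mem_pairs w.1.2) w.2.1 0 w.2.2
  have hmeas : Measurable fun w : pairs n × ℝ × Bool => energy (stepPath γ w.1 (0, w.2.2)) := by
    have h : Measurable fun x : pairs n × Bool => energy (stepPath γ x.1 (0, x.2)) :=
      measurable_of_countable _
    exact (h.comp (measurable_fst.prodMk measurable_snd.snd) :)
  set q := ENNReal.ofReal (2 * Real.pi * c)
  have hmarks (p : pairs n) :
      ∫⁻ z, energy (stepPath γ p (0, z.2)) ∂markedAngle c ν =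
        q * energy (stepPath γ p (0, true)) + (1 - q) * energy γ := by
    rw [lintegral_markedAngle_snd hν fun b => energy (stepPath γ p (0, b)),
      uniformAngle_univ hc, hγ.energy_stepPath_false (ne_of_mem_pairs p.2)]
  simp only [hangle]
  rw [lintegral_stepLaw hν hmeas]
  simp only [hmarks]
  rw [Finset.sum_coe_sort (pairs n) fun p => q * energy (stepPath γ p (0, true)) +
      (1 - q) * energy γ, Finset.sum_add_distrib, ← Finset.mul_sum, hγ.sum_energy_stepPath_true,
    Finset.sum_const, card_pairs, nsmul_eq_mul, ← ofReal_contraction_factor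
      (by positivity) (two_pi_mul_le_one hc hν) (Nat.choose_pos hn)]
  ring

variable {Ω : Type*} [MeasurableSpace Ω] {γ : Ω → ℝ → Matrix (Fin n) (Fin n) ℝ}

lemma IsRandomSOPath.map_stepPath (hγ : IsRandomSOPath γ) (hn : 2 ≤ n)
    (hν : uniformAngle c ≤ ν) (P : Measure Ω) (u : ℝ) :
    (P.prod (stepLaw n c ν)).map (fun w => stepPath (γ w.1) w.2.1 w.2.2 u) =
      (P.map (γ · u)).bind (kacKernel n ν) := by
  have := isProbabilityMeasure_stepLaw hn hν
  have hstep := hγ.isRandomSOPath_stepPath.measurable_eval u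
  refine Measure.ext_of_lintegral _ fun f hf => ?_
  have hkernel : Measurable fun x => ∫⁻ y, f y ∂kacKernel n ν x :=
    (Measure.measurable_lintegral hf).comp measurable_kacKernel
  have hfstep : Measurable fun w : Ω × pairs n × ℝ × Bool =>
      f (stepPath (γ w.1) w.2.1 w.2.2 u) := hf.comp hstep
  rw [lintegral_map hf hstep, lintegral_prod _ hfstep.aemeasurable,
    Measure.lintegral_bind measurable_kacKernel.aemeasurable hf.aemeasurable,
    lintegral_map hkernel (hγ.measurable_eval u)]
  exact lintegral_congr fun ω =>
    lintegral_stepPath_stepLaw hν (γ ω) u hf (hstep.comp (measurable_prodMk_left (x := ω)) :)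

lemma PathCoupled.bind_kacKernel {μ μ' : Measure (Matrix (Fin n) (Fin n) ℝ)} {e : ℝ≥0∞}
    (h : PathCoupled μ μ' e) (hn : 2 ≤ n) (hc : 0 ≤ c) (hν : uniformAngle c ≤ ν) :
    PathCoupled (μ.bind (kacKernel n ν)) (μ'.bind (kacKernel n ν))
      (ENNReal.ofReal (1 - 2 * Real.pi * c / n.choose 2) * e) := by
  obtain ⟨Ω, _, P, γ, _, hγ, rfl, rfl, he⟩ := h
  have := isProbabilityMeasure_stepLaw hn hν
  have hstep := hγ.isRandomSOPath_stepPath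
  refine ⟨Ω × pairs n × ℝ × Bool, inferInstance, P.prod (stepLaw n c ν), _, inferInstance, hstep,
    hγ.map_stepPath hn hν P 0, hγ.map_stepPath hn hν P 1, ?_⟩
  rw [lintegral_prod _ hstep.measurable_energy.aemeasurable]
  simp only [(hγ.isSOPath _).lintegral_energy_stepPath hn hc hν]
  rw [lintegral_const_mul _ hγ.measurable_energy]
  gcongr

lemma PathCoupled.kernelIterate {μ μ' : Measure (Matrix (Fin n) (Fin n) ℝ)} {e : ℝ≥0∞}
    (h : PathCoupled μ μ' e) (hn : 2 ≤ n) (hc : 0 ≤ c) (hν : uniformAngle c ≤ ν) (t : ℕ) :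
    PathCoupled (kernelIterate (kacKernel n ν) t μ) (kernelIterate (kacKernel n ν) t μ')
      (ENNReal.ofReal (1 - 2 * Real.pi * c / n.choose 2) ^ t * e) := by
  induction t with
  | zero => simpa [_root_.kernelIterate] using h
  | succ t ih =>
    rw [pow_succ', mul_assoc]
    exact ih.bind_kacKernel hn hc hν

end Contraction

section Logarithm

lemma mul_eq_zero_of_forall_col_or_row {l m n R : Type*} [Fintype m]
    [NonUnitalNonAssocSemiring R] {A : Matrix l m R} {B : Matrix m n R}
    (h : ∀ k, (∀ i, A i k = 0) ∨ ∀ j, B k j = 0) : A * B = 0 := by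
  ext i j
  rw [mul_apply]
  exact Finset.sum_eq_zero fun k _ => (h k).elim (fun hA => by simp [hA]) fun hB => by simp [hB]

variable {ι : Type*} [Fintype ι] [DecidableEq ι]

lemma hasSum_sinc (x : ℝ) :
    HasSum (fun m : ℕ => (-1) ^ m * x ^ (2 * m) / ((2 * m + 1).factorial : ℝ)) (Real.sinc x) := by
  rcases eq_or_ne x 0 with rfl | hx
  · convert hasSum_ite_eq (0 : ℕ) (1 : ℝ) using 1
    · ext m
      rcases eq_or_ne m 0 with rfl | hm <;> simp [*]
    · exact Real.sinc_zero
  · rw [Real.sinc_of_ne_zero hx]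
    refine ((Real.hasSum_sin x).div_const x).congr_fun fun m => ?_
    field_simp
    ring

lemma exp_eq_of_mul_self_eq_neg_diagonal_sq {A : Matrix ι ι ℝ} {φ : ι → ℝ}
    (h : A * A = -diagonal fun i => φ i ^ 2) :
    NormedSpace.exp A =
      diagonal (fun i => Real.cos (φ i)) + diagonal (fun i => Real.sinc (φ i)) * A := by
  have h_even (m : ℕ) : A ^ (2 * m) = diagonal fun i => (-1) ^ m * φ i ^ (2 * m) := by
    rw [pow_mul, sq, h, diagonal_neg, diagonal_pow]
    congr 1
    ext i
    rw [Pi.pow_apply, neg_pow, ← pow_mul]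
  rw [NormedSpace.exp_eq_tsum ℝ]
  refine HasSum.tsum_eq (HasSum.even_add_odd ?_ ?_)
  · refine Pi.hasSum.2 fun i => Pi.hasSum.2 fun j => ?_
    simp only [h_even, Matrix.smul_apply, smul_eq_mul]
    rcases eq_or_ne i j with rfl | hij
    · simpa [div_eq_inv_mul] using Real.hasSum_cos (φ i)
    · simp [hij]
  · refine Pi.hasSum.2 fun i => Pi.hasSum.2 fun j => ?_
    simp only [pow_succ _ (2 * _), h_even, Matrix.smul_apply, smul_eq_mul, diagonal_mul]
    refine ((hasSum_sinc (φ i)).mul_right (A i j)).congr_fun fun m => ?_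
    ring

lemma isUnit_of_posDef_add_transpose {M : Matrix ι ι ℝ} (hM : (M + Mᵀ).PosDef) : IsUnit M := by
  rw [isUnit_iff_isUnit_det, isUnit_iff_ne_zero]
  intro hdet
  obtain ⟨v, hv, hMv⟩ := exists_mulVec_eq_zero_iff.mpr hdet
  refine (hM.dotProduct_mulVec_pos hv).ne' ?_
  rw [star_trivial, add_mulVec, hMv, zero_add, mulVec_transpose, dotProduct_comm,
    ← dotProduct_mulVec, hMv, dotProduct_zero]

lemma det_eq_one_of_isUnit_one_add {R : Matrix ι ι ℝ} (hR : R * Rᵀ = 1) (h : IsUnit (1 + R)) :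
    R.det = 1 := by
  have h_factor : R * (1 + R)ᵀ = 1 + R := by
    rw [transpose_add, Matrix.mul_add, hR, transpose_one, Matrix.mul_one, add_comm]
  have hdet := congrArg det h_factor
  rw [det_mul, det_transpose] at hdet
  exact mul_right_cancel₀ ((isUnit_iff_isUnit_det _).mp h).ne_zero (by rw [hdet, one_mul])

lemma exists_skew_mul_self_eq_neg_diagonal_indicator (R : Type*) [CommRing R] {p : ι → Prop}
    [DecidablePred p] (h : Even (Finset.univ.filter p).card) :
    ∃ J : Matrix ι ι R, Jᵀ = -J ∧ J * J = -diagonal (fun i => if p i then 1 else 0) ∧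
      ∀ i, ¬p i → ∀ j, J i j = 0 := by
  obtain ⟨m, hm⟩ := h
  obtain ⟨e⟩ : Nonempty ({i // p i} ≃ Fin m ⊕ Fin m) := by
    rw [← Fintype.card_eq, Fintype.card_subtype, hm, Fintype.card_sum, Fintype.card_fin]
  set σ := (Equiv.sumCompl p).symm
  refine ⟨(fromBlocks ((J (Fin m) R).submatrix e e) 0 0 0).submatrix σ σ, ?_, ?_, ?_⟩
  · simp only [transpose_submatrix, fromBlocks_transpose, J_transpose, transpose_zero]
    ext i j
    rcases hi : σ i <;> rcases hj : σ j <;> simp [hi, hj]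
  · rw [submatrix_mul_equiv, fromBlocks_multiply]
    ext i j
    obtain ⟨k, rfl⟩ := σ.symm.surjective i
    obtain ⟨l, rfl⟩ := σ.symm.surjective j
    have hne (k : {i // p i}) (l : {i // ¬p i}) : (k : ι) ≠ l := fun h => l.2 (h ▸ k.2)
    rcases k with k | k <;> rcases l with l | l <;>
      simp [J_squared, σ, one_apply, diagonal_apply, Subtype.ext_iff, k.2, hne]
  · intro i hi j
    have hσ : σ i = Sum.inr ⟨i, hi⟩ := Equiv.sumCompl_symm_apply_of_neg hi
    rcases hj : σ j <;> simp [hσ, hj]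

section DiagonalSymmetricPart

lemma commute_of_mul_transpose_self {S T : Matrix ι ι ℝ} (hS : Sᵀ = S) (hT : Tᵀ = -T)
    (h : (S + T) * (S + T)ᵀ = 1) : Commute S T := by
  have h' : (S + T)ᵀ * (S + T) = 1 := mul_eq_one_comm.mp h
  rw [transpose_add, hS, hT] at h h'
  have h_two : (2 : ℝ) • (S * T - T * S) = (S + -T) * (S + T) - (S + T) * (S + -T) := by
    rw [two_smul]
    noncomm_ring
  rw [h, h', sub_self] at h_two
  exact sub_eq_zero.mp ((smul_eq_zero.mp h_two).resolve_left two_ne_zero)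

lemma mul_self_eq_of_mul_transpose_self {S T : Matrix ι ι ℝ} (hS : Sᵀ = S) (hT : Tᵀ = -T)
    (h : (S + T) * (S + T)ᵀ = 1) : T * T = S * S - 1 := by
  have hcomm : S * T = T * S := commute_of_mul_transpose_self hS hT h
  rw [transpose_add, hS, hT] at h
  rw [← h, add_mul, mul_add, mul_add, mul_neg, mul_neg, hcomm]
  abel

variable {c : ι → ℝ} {T : Matrix ι ι ℝ}

lemma sum_row_sq_of_skew (hT : Tᵀ = -T) (hTT : T * T = diagonal c * diagonal c - 1) (i : ι) :
    ∑ j, T i j ^ 2 = 1 - c i ^ 2 := by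
  have hij (j : ι) : T j i = -T i j := congrFun₂ hT i j
  have h := congrFun₂ hTT i i
  rw [diagonal_mul_diagonal] at h
  simp only [mul_apply, hij, Matrix.sub_apply, diagonal_apply_eq, one_apply_eq, mul_neg,
    Finset.sum_neg_distrib, ← sq] at h
  linarith

lemma row_eq_zero_of_sq_eq_one (hT : Tᵀ = -T) (hTT : T * T = diagonal c * diagonal c - 1) {i : ι}
    (hi : c i ^ 2 = 1) (j : ι) : T i j = 0 := by
  have h := sum_row_sq_of_skew hT hTT i
  rw [hi, sub_self, Finset.sum_eq_zero_iff_of_nonneg fun j _ => sq_nonneg _] at h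
  exact pow_eq_zero_iff two_ne_zero |>.mp (h j (Finset.mem_univ j))

lemma abs_le_one_of_skew (hT : Tᵀ = -T) (hTT : T * T = diagonal c * diagonal c - 1) (i : ι) :
    |c i| ≤ 1 := by
  rw [← sq_le_one_iff_abs_le_one, ← sub_nonneg, ← sum_row_sq_of_skew hT hTT i]
  positivity

lemma isUnit_one_add_diagonal_mul {s : ι → ℝ} (hT : Tᵀ = -T) (hsT : diagonal s * T = T)
    (hsc : ∀ i, -1 < s i * c i) : IsUnit (1 + diagonal s * (diagonal c + T)) := by
  apply isUnit_of_posDef_add_transpose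
  have h_sym : 1 + diagonal s * (diagonal c + T) + (1 + diagonal s * (diagonal c + T))ᵀ =
      diagonal fun i => 2 * (1 + s i * c i) := by
    rw [mul_add, hsT, diagonal_mul_diagonal, transpose_add, transpose_add, hT, transpose_one,
      diagonal_transpose, ← diagonal_one]
    ext i j
    rcases eq_or_ne i j with rfl | hij
    · simp only [Matrix.add_apply, Matrix.neg_apply, diagonal_apply_eq]
      ring
    · simp [hij]
  rw [h_sym, posDef_diagonal_iff]
  intro i
  linarith [hsc i]

-- Negating the rows in which `c = -1` removes the eigenvalue `-1`, so that the determinant of the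
-- product is `1`; it is also `(-1) ^ #{i | c i = -1}`.
lemma even_card_eq_neg_one (hT : Tᵀ = -T) (hQ : (diagonal c + T) * (diagonal c + T)ᵀ = 1)
    (hdet : (diagonal c + T).det = 1) : Even (Finset.univ.filter fun i => c i = -1).card := by
  have hTT := mul_self_eq_of_mul_transpose_self (diagonal_transpose c) hT hQ
  set s : ι → ℝ := fun i => if c i = -1 then -1 else 1 with hs
  have hsT : diagonal s * T = T := by
    ext i j
    by_cases hi : c i = -1
    · simp [row_eq_zero_of_sq_eq_one hT hTT (show c i ^ 2 = 1 by simp [hi]) j]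
    · simp [hs, hi]
  have hss : diagonal s * diagonal s = 1 := by
    rw [diagonal_mul_diagonal, ← diagonal_one]
    congr! 2 with i
    by_cases hi : c i = -1 <;> simp [hs, hi]
  have h_orth : (diagonal s * (diagonal c + T)) * (diagonal s * (diagonal c + T))ᵀ = 1 := by
    rw [transpose_mul, diagonal_transpose, Matrix.mul_assoc, ← Matrix.mul_assoc _ _ (diagonal s),
      hQ, Matrix.one_mul, hss]
  have hsc (i : ι) : -1 < s i * c i := by
    by_cases hi : c i = -1
    · simp [hs, hi]
    · have := lt_of_le_of_ne (abs_le.mp (abs_le_one_of_skew hT hTT i)).1 (Ne.symm hi)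
      simpa [hs, hi] using this
  have h_unit := isUnit_one_add_diagonal_mul hT hsT hsc
  have h_det := det_eq_one_of_isUnit_one_add h_orth h_unit
  rw [det_mul, hdet, mul_one, det_diagonal, hs, Finset.prod_ite] at h_det
  simp only [Finset.prod_const, one_pow, mul_one] at h_det
  exact (neg_one_pow_eq_one_iff_even (by norm_num)).mp h_det

lemma commute_diagonal_comp (h : Commute (diagonal c) T) (f : ℝ → ℝ) :
    Commute (diagonal fun i => f (c i)) T := by
  ext i j
  have hij := congrFun₂ h.eq i j
  rw [diagonal_mul, mul_diagonal, mul_comm] at hij ⊢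
  rcases mul_eq_mul_left_iff.mp hij with hc | hT
  · rw [hc]
  · simp [hT]

lemma div_sin_arccos_sq_mul {x : ℝ} (hx : |x| ≤ 1) (hx' : x ≠ -1) :
    (Real.arccos x / Real.sin (Real.arccos x)) ^ 2 * (1 - x ^ 2) = Real.arccos x ^ 2 := by
  rcases eq_or_ne x 1 with rfl | hx1
  · simp
  have hlt : 0 < 1 - x ^ 2 := by
    rw [sub_pos, sq_lt_one_iff_abs_lt_one]
    exact lt_of_le_of_ne hx (by grind)
  rw [Real.sin_arccos, div_pow, Real.sq_sqrt hlt.le, div_mul_cancel₀ _ hlt.ne']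

lemma sinc_arccos_mul_div_sin {x : ℝ} (hx : |x| < 1) :
    Real.sinc (Real.arccos x) * (Real.arccos x / Real.sin (Real.arccos x)) = 1 := by
  have h : 0 < Real.arccos x := Real.arccos_pos.mpr (abs_lt.mp hx).2
  have hs : 0 < Real.sin (Real.arccos x) := by
    rw [Real.sin_arccos]
    exact Real.sqrt_pos.mpr (sub_pos.mpr ((sq_lt_one_iff_abs_lt_one x).mpr hx))
  rw [Real.sinc_of_ne_zero h.ne', div_mul_div_cancel₀ h.ne', div_self hs.ne']

/-- A logarithm of `diagonal c + T`, for skew-symmetric `T` commuting with `diagonal c`: on the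
eigenvalue `x` of `diagonal c` it is `T` rescaled so as to rotate by the angle `arccos x`, and `J`
completes it where `x = -1` and `T` vanishes. -/
def diagonalAddSkewLog (c : ι → ℝ) (T J : Matrix ι ι ℝ) : Matrix ι ι ℝ :=
  diagonal (fun i => Real.arccos (c i) / Real.sin (Real.arccos (c i))) * T + Real.pi • J

lemma diagonalAddSkewLog_transpose {J : Matrix ι ι ℝ} (hcT : Commute (diagonal c) T)
    (hT : Tᵀ = -T) (hJ : Jᵀ = -J) :
    (diagonalAddSkewLog c T J)ᵀ = -diagonalAddSkewLog c T J := by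
  rw [diagonalAddSkewLog, transpose_add, transpose_mul, diagonal_transpose, transpose_smul, hT, hJ,
    neg_mul, smul_neg, neg_add,
    (commute_diagonal_comp hcT fun x => Real.arccos x / Real.sin (Real.arccos x)).eq]

lemma diagonalAddSkewLog_mul_self {J : Matrix ι ι ℝ} (hcT : Commute (diagonal c) T)
    (hT : Tᵀ = -T) (hTT : T * T = diagonal c * diagonal c - 1) (hJ : Jᵀ = -J)
    (hJJ : J * J = -diagonal (fun i => if c i = -1 then 1 else 0))
    (hJ0 : ∀ i, c i ≠ -1 → ∀ j, J i j = 0) :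
    diagonalAddSkewLog c T J * diagonalAddSkewLog c T J =
      -diagonal fun i => Real.arccos (c i) ^ 2 := by
  have hJT : J * T = 0 := by
    refine mul_eq_zero_of_forall_col_or_row fun k => ?_
    by_cases hk : c k = -1
    · exact Or.inr (row_eq_zero_of_sq_eq_one hT hTT (by rw [hk]; norm_num))
    · refine Or.inl fun i => ?_
      rw [← transpose_apply J, hJ, Matrix.neg_apply, hJ0 k hk i, neg_zero]
  have hTJ : T * J = 0 := by
    rw [← transpose_eq_zero, transpose_mul, hT, hJ, neg_mul_neg, hJT]
  set g : ι → ℝ := fun i => Real.arccos (c i) / Real.sin (Real.arccos (c i)) with hg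
  have hgT : Commute (diagonal g) T :=
    commute_diagonal_comp hcT fun x => Real.arccos x / Real.sin (Real.arccos x)
  have h_square : (diagonal g * T + Real.pi • J) * (diagonal g * T + Real.pi • J) =
      diagonal g * diagonal g * (T * T) + Real.pi ^ 2 • (J * J) := by
    have h_cross : J * (diagonal g * T) = 0 := by
      rw [hgT.eq, ← Matrix.mul_assoc, hJT, Matrix.zero_mul]
    rw [add_mul, mul_add, mul_add, smul_mul_assoc, smul_mul_smul_comm, mul_smul_comm, h_cross,
      Matrix.mul_assoc _ T J, hTJ, hgT.symm.mul_mul_mul_comm, sq]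
    simp
  rw [diagonalAddSkewLog, h_square, hTT, hJJ, diagonal_mul_diagonal, diagonal_mul_diagonal,
    ← diagonal_one, diagonal_sub, diagonal_mul_diagonal, diagonal_neg, ← diagonal_smul,
    diagonal_add, diagonal_neg]
  congr! 2 with i
  by_cases hi : c i = -1
  · simp [hi]
  · have := div_sin_arccos_sq_mul (abs_le_one_of_skew hT hTT i) hi
    simp only [hg, hi, Pi.smul_apply, if_false, smul_eq_mul]
    linarith

lemma exp_diagonalAddSkewLog {J : Matrix ι ι ℝ} (hcT : Commute (diagonal c) T)
    (hT : Tᵀ = -T) (hTT : T * T = diagonal c * diagonal c - 1) (hJ : Jᵀ = -J)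
    (hJJ : J * J = -diagonal (fun i => if c i = -1 then 1 else 0))
    (hJ0 : ∀ i, c i ≠ -1 → ∀ j, J i j = 0) :
    NormedSpace.exp (diagonalAddSkewLog c T J) = diagonal c + T := by
  have hc (i : ι) : |c i| ≤ 1 := abs_le_one_of_skew hT hTT i
  have hcos : (fun i => Real.cos (Real.arccos (c i))) = c :=
    funext fun i => Real.cos_arccos (abs_le.mp (hc i)).1 (abs_le.mp (hc i)).2
  rw [exp_eq_of_mul_self_eq_neg_diagonal_sq (diagonalAddSkewLog_mul_self hcT hT hTT hJ hJJ hJ0),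
    hcos]
  congr 1
  ext i j
  rw [diagonalAddSkewLog, diagonal_mul, Matrix.add_apply, diagonal_mul, Matrix.smul_apply,
    smul_eq_mul, mul_add, ← mul_assoc]
  rcases (hc i).lt_or_eq with hi | hi
  · rw [sinc_arccos_mul_div_sin hi, one_mul, hJ0 i (by grind) j, mul_zero, mul_zero, add_zero]
  · rw [row_eq_zero_of_sq_eq_one hT hTT (by rw [← sq_abs, hi, one_pow]) j]
    by_cases h : c i = -1
    · simp [h, Real.sinc_of_ne_zero Real.pi_ne_zero]
    · simp [hJ0 i h j]

lemma norm_sq_le_of_skew_of_mul_self {A : Matrix ι ι ℝ} (hA : Aᵀ = -A) {φ : ι → ℝ} {r : ℝ}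
    (hAA : A * A = -diagonal fun i => φ i ^ 2) (hφ : ∀ i, |φ i| ≤ r) :
    ‖A‖ ^ 2 ≤ r ^ 2 * Fintype.card ι := by
  rw [frobenius_norm_sq_eq_trace, hA, Matrix.neg_mul, hAA, neg_neg, trace_diagonal, mul_comm,
    ← nsmul_eq_mul]
  exact Finset.sum_le_card_nsmul _ _ _ fun i _ => sq_le_sq.mpr ((hφ i).trans (le_abs_self r))

end DiagonalSymmetricPart

lemma exists_skew_log_of_diagonal_symm_part {Q : Matrix ι ι ℝ}
    (hQ : Q ∈ specialOrthogonalGroup ι ℝ) {c : ι → ℝ} (hc : Q + Qᵀ = (2 : ℝ) • diagonal c) :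
    ∃ A : Matrix ι ι ℝ, Aᵀ = -A ∧ ‖A‖ ^ 2 ≤ Real.pi ^ 2 * Fintype.card ι ∧
      NormedSpace.exp A = Q := by
  obtain ⟨T, rfl⟩ : ∃ T, diagonal c + T = Q := ⟨Q - diagonal c, add_sub_cancel _ _⟩
  rw [transpose_add, diagonal_transpose, two_smul] at hc
  have hT : Tᵀ = -T := by
    refine eq_neg_of_add_eq_zero_left ?_
    rw [add_add_add_comm, add_eq_left] at hc
    rwa [add_comm]
  obtain ⟨h_orth, h_det⟩ := mem_specialOrthogonalGroup_iff.mp hQ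
  replace h_orth := (mem_orthogonalGroup_iff _ _).mp h_orth
  have hcT := commute_of_mul_transpose_self (diagonal_transpose c) hT h_orth
  have hTT := mul_self_eq_of_mul_transpose_self (diagonal_transpose c) hT h_orth
  obtain ⟨J, hJ, hJJ, hJ0⟩ := exists_skew_mul_self_eq_neg_diagonal_indicator ℝ
    (even_card_eq_neg_one hT h_orth h_det)
  refine ⟨diagonalAddSkewLog c T J, diagonalAddSkewLog_transpose hcT hT hJ,
    norm_sq_le_of_skew_of_mul_self (diagonalAddSkewLog_transpose hcT hT hJ)
      (diagonalAddSkewLog_mul_self hcT hT hTT hJ hJJ hJ0) fun i => ?_,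
    exp_diagonalAddSkewLog hcT hT hTT hJ hJJ hJ0⟩
  rw [abs_of_nonneg (Real.arccos_nonneg _)]
  exact Real.arccos_le_pi _

lemma exists_orthogonal_diagonalization {S : Matrix ι ι ℝ} (hS : Sᵀ = S) :
    ∃ U ∈ orthogonalGroup ι ℝ, ∃ d : ι → ℝ, S = U * diagonal d * Uᵀ := by
  have hS' : S.IsHermitian := by rwa [IsHermitian, conjTranspose_eq_transpose_of_trivial]
  refine ⟨hS'.eigenvectorUnitary, hS'.eigenvectorUnitary.2, hS'.eigenvalues, ?_⟩
  have h := hS'.spectral_theorem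
  rwa [Unitary.conjStarAlgAut_apply, star_eq_conjTranspose,
    conjTranspose_eq_transpose_of_trivial] at h

lemma exists_skew_log {Q : Matrix ι ι ℝ} (hQ : Q ∈ specialOrthogonalGroup ι ℝ) :
    ∃ A : Matrix ι ι ℝ, Aᵀ = -A ∧ ‖A‖ ^ 2 ≤ Real.pi ^ 2 * Fintype.card ι ∧
      NormedSpace.exp A = Q := by
  obtain ⟨U, hU, d, hd⟩ := exists_orthogonal_diagonalization (S := Q + Qᵀ)
    (by rw [transpose_add, transpose_transpose, add_comm])
  have hUU : U * Uᵀ = 1 := (mem_orthogonalGroup_iff _ _).mp hU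
  have hUU' : Uᵀ * U = 1 := mul_eq_one_comm.mp hUU
  set Q' := Uᵀ * Q * U with hQ'
  have hQ'_conj : U * Q' * Uᵀ = Q := by
    rw [hQ', Matrix.mul_assoc, Matrix.mul_assoc, Matrix.mul_assoc, hUU, Matrix.mul_one,
      ← Matrix.mul_assoc, hUU, Matrix.one_mul]
  have hQ'_mem : Q' ∈ specialOrthogonalGroup ι ℝ := by
    refine mem_specialOrthogonalGroup_iff.mpr ⟨?_, ?_⟩
    · exact mul_mem (mul_mem (Unitary.star_mem hU) hQ.1) hU
    · rw [hQ', det_mul_right_comm, hUU', Matrix.one_mul]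
      exact hQ.2
  have hQ'_symm : Q' + Q'ᵀ = (2 : ℝ) • diagonal fun i => d i / 2 := by
    have h : Q' + Q'ᵀ = Uᵀ * (Q + Qᵀ) * U := by
      simp only [hQ', transpose_mul, transpose_transpose, mul_add, add_mul, Matrix.mul_assoc]
    rw [h, hd, Matrix.mul_assoc, Matrix.mul_assoc, hUU', Matrix.mul_one, ← Matrix.mul_assoc, hUU',
      Matrix.one_mul, ← diagonal_smul]
    congr! 1
    ext i
    exact (mul_div_cancel₀ (d i) two_ne_zero).symm
  obtain ⟨A, hA, hA_norm, hA_exp⟩ := exists_skew_log_of_diagonal_symm_part hQ'_mem hQ'_symm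
  refine ⟨U * A * Uᵀ, ?_, ?_, ?_⟩
  · rw [transpose_mul, transpose_mul, transpose_transpose, hA, Matrix.mul_assoc, neg_mul, mul_neg]
  · rwa [frobenius_norm_mul_right _ (by rwa [transpose_transpose]), frobenius_norm_mul_left hUU']
  · have hinv : U⁻¹ = Uᵀ := inv_eq_right_inv hUU
    have h_conj : NormedSpace.exp (U * A * U⁻¹) = U * NormedSpace.exp A * U⁻¹ :=
      exp_conj U A (IsUnit.of_mul_eq_one _ hUU)
    rw [← hinv, h_conj, hA_exp, hinv, hQ'_conj]

end Logarithm

section Lifting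

lemma exists_nonneg_linearMap_comp_eq {E F : Type*} [AddCommGroup E] [Module ℝ E] [AddCommGroup F]
    [Module ℝ F] (s : PointedCone ℝ E) (L : F →ₗ[ℝ] E) (hL : Function.Injective L)
    (I : F →ₗ[ℝ] ℝ) (h_nonneg : ∀ f, L f ∈ s → 0 ≤ I f) (h_dense : ∀ h, ∃ f, L f + h ∈ s) :
    ∃ g : E →ₗ[ℝ] ℝ, (∀ f, g (L f) = I f) ∧ ∀ h ∈ s, 0 ≤ g h := by
  set e := LinearEquiv.ofInjective L hL
  obtain ⟨g, hg, hg_nonneg⟩ := riesz_extension s ⟨L.range, I ∘ₗ e.symm⟩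
    (by
      rintro ⟨_, f, rfl⟩ hf
      exact (h_nonneg f hf).trans_eq (congrArg I (e.symm_apply_apply f).symm))
    fun h => (h_dense h).imp' (fun f => ⟨L f, f, rfl⟩) fun _ => id
  exact ⟨g, fun f => (hg (e f)).trans (congrArg I (e.symm_apply_apply f)), hg_nonneg⟩

open scoped CompactlySupported in
-- The integral against `ν`, as a functional on the functions which factor through `q`, extends to a
-- positive functional on all continuous functions on `X`.
lemma exists_isFiniteMeasure_map_eq {X Y : Type*} [TopologicalSpace X] [CompactSpace X] [T2Space X]
    [MeasurableSpace X] [BorelSpace X] [TopologicalSpace Y] [CompactSpace Y]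
    [TopologicalSpace.PseudoMetrizableSpace Y] [MeasurableSpace Y] [BorelSpace Y] {q : X → Y}
    (hq : Continuous q) (hq_surj : Function.Surjective q) (ν : Measure Y) [IsFiniteMeasure ν] :
    ∃ l : Measure X, IsFiniteMeasure l ∧ l.map q = ν := by
  let pullback : C(Y, ℝ) →ₗ[ℝ] C_c(X, ℝ) :=
    { toFun := fun f => ⟨f.comp ⟨q, hq⟩, HasCompactSupport.of_compactSpace _⟩
      map_add' := fun _ _ => rfl
      map_smul' := fun _ _ => rfl }
  have h_inj : Function.Injective pullback := fun f g hfg =>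
    ContinuousMap.ext <| hq_surj.forall.mpr fun x => DFunLike.congr_fun hfg x
  have h_int (f : C(Y, ℝ)) : Integrable f ν :=
    f.continuous.integrable_of_hasCompactSupport (HasCompactSupport.of_compactSpace _)
  let integral : C(Y, ℝ) →ₗ[ℝ] ℝ :=
    { toFun := fun f => ∫ y, f y ∂ν
      map_add' := fun f g => integral_add (h_int f) (h_int g)
      map_smul' := fun r f => integral_const_mul r f }
  let nonneg : PointedCone ℝ C_c(X, ℝ) :=
    { carrier := {h | 0 ≤ h}
      add_mem' := fun hg hh x => add_nonneg (hg x) (hh x)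
      zero_mem' := fun _ => le_refl (0 : ℝ)
      smul_mem' := fun r _ hh x => mul_nonneg r.2 (hh x) }
  obtain ⟨Λ, hΛ, hΛ_nonneg⟩ := exists_nonneg_linearMap_comp_eq nonneg
    pullback h_inj integral (fun f hf => integral_nonneg (hq_surj.forall.mpr hf)) fun h => by
      obtain ⟨b, hb⟩ := isCompact_univ.exists_bound_of_continuousOn h.continuous.continuousOn
      refine ⟨ContinuousMap.const Y b, fun x => ?_⟩
      exact neg_le_iff_add_nonneg'.mp (abs_le.mp (hb x (Set.mem_univ x))).1
  refine ⟨RealRMK.rieszMeasure (PositiveLinearMap.mk₀ Λ hΛ_nonneg), inferInstance, ?_⟩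
  refine ext_of_forall_integral_eq_of_IsFiniteMeasure fun f => ?_
  rw [integral_map hq.aemeasurable f.continuous.aestronglyMeasurable]
  exact (RealRMK.integral_rieszMeasure _ (pullback f.toContinuousMap)).trans (hΛ f.toContinuousMap)

end Lifting

section OneParameterSubgroups

variable {n : ℕ} {A x : Matrix (Fin n) (Fin n) ℝ}

lemma exp_mem_SO (hA : Aᵀ = -A) : NormedSpace.exp A ∈ SO n := by
  have hskew : (1 / 2 : ℝ) • A ∈ skewAdjoint (Matrix (Fin n) (Fin n) ℝ) := by
    rw [skewAdjoint.mem_iff, star_eq_conjTranspose, conjTranspose_eq_transpose_of_trivial,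
      transpose_smul, hA, smul_neg]
  rw [← one_smul ℝ A, ← add_halves (1 : ℝ), add_smul,
    NormedSpace.exp_add_of_commute (Commute.refl _)]
  exact mul_self_mem_SO ((mem_orthogonalGroup_iff _ _).mp
    (NormedSpace.exp_mem_unitary_of_mem_skewAdjoint hskew))

lemma hasDerivAt_exp_smul_mul (A x : Matrix (Fin n) (Fin n) ℝ) (u : ℝ) :
    HasDerivAt (fun v : ℝ => NormedSpace.exp (v • A) * x)
      (A * (NormedSpace.exp (u • A) * x)) u := by
  rw [← Matrix.mul_assoc]
  exact (hasDerivAt_exp_smul_const' A u).mul_const x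

lemma isSOPath_exp_smul_mul (hA : Aᵀ = -A) (hx : x ∈ SO n) :
    IsSOPath fun u : ℝ => NormedSpace.exp (u • A) * x where
  contDiff := by
    refine contDiff_one_iff_deriv.mpr
      ⟨fun u => (hasDerivAt_exp_smul_mul A x u).differentiableAt, ?_⟩
    rw [funext fun u => (hasDerivAt_exp_smul_mul A x u).deriv]
    exact continuous_const.mul
      ((NormedSpace.exp_continuous.comp (continuous_id.smul continuous_const)).mul continuous_const)
  mem u := SO.mul_mem (exp_mem_SO (by rw [transpose_smul, hA, smul_neg])) hx

lemma energy_exp_smul_mul (hA : Aᵀ = -A) (hx : x ∈ SO n) :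
    energy (fun u : ℝ => NormedSpace.exp (u • A) * x) = ENNReal.ofReal (‖A‖ ^ 2) := by
  have hspeed (u : ℝ) : ‖deriv (fun v : ℝ => NormedSpace.exp (v • A) * x) u‖ₑ = ‖A‖ₑ := by
    rw [(hasDerivAt_exp_smul_mul A x u).deriv, ← ofReal_norm,
      frobenius_norm_mul_right _ ((isSOPath_exp_smul_mul hA hx).mem u).1, ofReal_norm]
  simp [energy, hspeed, ENNReal.ofReal_pow (norm_nonneg A)]

lemma isCompact_skew_norm_sq_le (n : ℕ) (r : ℝ) :
    IsCompact {A : Matrix (Fin n) (Fin n) ℝ | Aᵀ = -A ∧ ‖A‖ ^ 2 ≤ r} := by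
  refine Metric.isCompact_of_isClosed_isBounded ?_ ?_
  · have h1 : IsClosed {A : Matrix (Fin n) (Fin n) ℝ | Aᵀ = -A} :=
      isClosed_eq continuous_id.matrix_transpose continuous_neg
    have h2 : IsClosed {A : Matrix (Fin n) (Fin n) ℝ | ‖A‖ ^ 2 ≤ r} :=
      isClosed_le (continuous_norm.pow 2) continuous_const
    exact h1.inter h2
  · exact isBounded_iff_forall_norm_le.mpr ⟨√r, fun A hA => Real.le_sqrt_of_sq_le hA.2⟩

end OneParameterSubgroups

section Haar

lemma map_mul_right_of_isProbabilityMeasure {G : Type*} [TopologicalSpace G] [Group G]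
    [IsTopologicalGroup G] [CompactSpace G] [MeasurableSpace G] [BorelSpace G] (m : Measure G)
    [m.IsHaarMeasure] [IsProbabilityMeasure m] (g : G) : m.map (· * g) = m := by
  have hm : AEMeasurable (· * g) m := (measurable_mul_const g).aemeasurable
  have := Measure.isProbabilityMeasure_map hm
  obtain ⟨c, hc⟩ : ∃ c : NNReal, m.map (· * g) = c • m :=
    ⟨_, Measure.isMulInvariant_eq_smul_of_compactSpace _ m⟩
  have hc_one : c = 1 := by
    have h := congrArg (· Set.univ) hc
    simp only [Measure.smul_apply, measure_univ, ENNReal.smul_def, smul_eq_mul, mul_one] at h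
    exact_mod_cast h.symm
  rw [hc, hc_one, one_smul]

lemma isHaarLike_range {G X : Type*} [TopologicalSpace G] [Group G] [IsTopologicalGroup G]
    [CompactSpace G] [MeasurableSpace G] [BorelSpace G] [Mul X] [MeasurableSpace X]
    [MeasurableMul X] (φ : G →ₙ* X) (hφ : Measurable φ) (hrange : MeasurableSet (Set.range φ)) :
    IsHaarLike (Set.range φ) ((Measure.haarMeasure ⊤).map φ) := by
  set m : Measure G := Measure.haarMeasure ⊤
  have : IsProbabilityMeasure m := ⟨Measure.haarMeasure_self⟩
  refine ⟨Measure.isProbabilityMeasure_map hφ.aemeasurable, ?_, ?_⟩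
  · rw [Measure.map_apply hφ hrange.compl, Set.preimage_compl, Set.preimage_range,
      Set.compl_univ, measure_empty]
  · rintro _ ⟨g, rfl⟩
    have hleft : (fun x => φ g * x) ∘ φ = φ ∘ (g * ·) := funext fun h => (map_mul φ g h).symm
    have hright : (fun x => x * φ g) ∘ φ = φ ∘ (· * g) := funext fun h => (map_mul φ h g).symm
    rw [Measure.map_map (measurable_const_mul _) hφ, Measure.map_map (measurable_mul_const _) hφ,
      hleft, hright, ← Measure.map_map hφ (measurable_const_mul g),
      ← Measure.map_map hφ (measurable_mul_const g), map_mul_left_eq_self,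
      map_mul_right_of_isProbabilityMeasure]
    exact ⟨rfl, rfl⟩

instance compactSpace_specialOrthogonalGroup (n : ℕ) :
    CompactSpace (specialOrthogonalGroup (Fin n) ℝ) :=
  isCompact_iff_compactSpace.mp (SO_eq_specialOrthogonalGroup n ▸ isCompact_SO n)

instance isTopologicalGroup_specialOrthogonalGroup (n : ℕ) :
    IsTopologicalGroup (specialOrthogonalGroup (Fin n) ℝ) where
  continuous_inv := continuous_subtype_val.matrix_transpose.subtype_mk _

lemma isHaarLike_haarLike_SO (n : ℕ) : IsHaarLike (SO n) (haarLike (SO n)) := by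
  have h : ∃ H, IsHaarLike (SO n) H := by
    have hrange : Set.range (specialOrthogonalGroup (Fin n) ℝ).subtype = SO n := by
      rw [SO_eq_specialOrthogonalGroup]
      exact Subtype.range_coe
    have hmeas := (isCompact_SO n).isClosed.measurableSet
    rw [← hrange] at hmeas ⊢
    exact ⟨_, isHaarLike_range (specialOrthogonalGroup (Fin n) ℝ).subtype.toMulHom
      measurable_subtype_coe hmeas⟩
  rw [haarLike, dif_pos h]
  exact h.choose_spec

variable {n : ℕ} {H μ : Measure (Matrix (Fin n) (Fin n) ℝ)}

lemma IsHaarLike.bind_kacKernel (hH : IsHaarLike (SO n) H) (hn : 2 ≤ n) (ν : Measure ℝ)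
    [IsProbabilityMeasure ν] : H.bind (kacKernel n ν) = H := by
  have := hH.1
  refine Measure.ext_of_lintegral _ fun f hf => ?_
  have hjoint (i j : Fin n) : Measurable fun z : Matrix (Fin n) (Fin n) ℝ × ℝ =>
      f (kacRot i j z.2 * z.1) :=
    hf.comp (((measurable_kacRot i j).comp measurable_snd).mul measurable_fst)
  have hrot (p) (hp : p ∈ pairs n) :
      ∫⁻ x, ∫⁻ θ, f (kacRot p.1 p.2 θ * x) ∂ν ∂H = ∫⁻ x, f x ∂H := by
    have hinv (θ : ℝ) : ∫⁻ x, f (kacRot p.1 p.2 θ * x) ∂H = ∫⁻ x, f x ∂H := by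
      conv_rhs => rw [← (hH.2.2 _ (kacRot_mem_SO (ne_of_mem_pairs hp) θ)).1]
      rw [lintegral_map hf (measurable_const_mul _)]
    rw [lintegral_lintegral_swap (hjoint _ _).aemeasurable]
    simp [hinv]
  rw [Measure.lintegral_bind measurable_kacKernel.aemeasurable hf.aemeasurable]
  simp_rw [lintegral_kacKernel hf]
  rw [lintegral_const_mul _
      (Finset.measurable_fun_sum _ fun p _ => (hjoint p.1 p.2).lintegral_prod_right'),
    lintegral_finsetSum _ fun p _ => (hjoint p.1 p.2).lintegral_prod_right',
    Finset.sum_congr rfl hrot, Finset.sum_const, card_pairs, nsmul_eq_mul, ← mul_assoc,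
    ENNReal.inv_mul_cancel _ (ENNReal.natCast_ne_top _), one_mul]
  exact_mod_cast (Nat.choose_pos hn).ne'

lemma IsHaarLike.kernelIterate_kacKernel (hH : IsHaarLike (SO n) H) (hn : 2 ≤ n) (ν : Measure ℝ)
    [IsProbabilityMeasure ν] (t : ℕ) : kernelIterate (kacKernel n ν) t H = H := by
  induction t with
  | zero => rfl
  | succ t ih => rw [kernelIterate, ih, hH.bind_kacKernel hn ν]

lemma exists_isProbabilityMeasure_map_val_eq {X : Type*} [MeasurableSpace X] {S : Set X}
    (hS : MeasurableSet S) (μ : Measure X) [IsProbabilityMeasure μ] (hμ : μ Sᶜ = 0) :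
    ∃ m : Measure S, IsProbabilityMeasure m ∧ m.map Subtype.val = μ := by
  have h : (μ.comap (Subtype.val : S → X)).map Subtype.val = μ := by
    rw [map_comap_subtype_coe hS, Measure.restrict_eq_self_of_ae_mem hμ]
  have : IsProbabilityMeasure ((μ.comap (Subtype.val : S → X)).map Subtype.val) := by rwa [h]
  exact ⟨_, Measure.isProbabilityMeasure_of_map Subtype.val, h⟩

lemma exists_isProbabilityMeasure_map_exp_eq (μ : Measure (Matrix (Fin n) (Fin n) ℝ))
    [IsProbabilityMeasure μ] (hμ : μ (SO n)ᶜ = 0) :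
    ∃ l : Measure {A : Matrix (Fin n) (Fin n) ℝ // Aᵀ = -A ∧ ‖A‖ ^ 2 ≤ Real.pi ^ 2 * n},
      IsProbabilityMeasure l ∧ l.map (fun A => NormedSpace.exp A.1) = μ := by
  have : CompactSpace {A : Matrix (Fin n) (Fin n) ℝ // Aᵀ = -A ∧ ‖A‖ ^ 2 ≤ Real.pi ^ 2 * n} :=
    isCompact_iff_compactSpace.mp (isCompact_skew_norm_sq_le n _)
  have : CompactSpace (SO n) := isCompact_iff_compactSpace.mp (isCompact_SO n)
  obtain ⟨m, _, hm⟩ :=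
    exists_isProbabilityMeasure_map_val_eq (isCompact_SO n).isClosed.measurableSet μ hμ
  let expSO (A : {A : Matrix (Fin n) (Fin n) ℝ // Aᵀ = -A ∧ ‖A‖ ^ 2 ≤ Real.pi ^ 2 * n}) : SO n :=
    ⟨NormedSpace.exp A.1, exp_mem_SO A.2.1⟩
  have h_cont : Continuous expSO :=
    (NormedSpace.exp_continuous.comp continuous_subtype_val).subtype_mk _
  have h_surj : Function.Surjective expSO := fun Q => by
    obtain ⟨A, hA, hA_norm, hA_exp⟩ :=
      exists_skew_log ((SO_eq_specialOrthogonalGroup n).subset Q.2)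
    exact ⟨⟨A, hA, by simpa using hA_norm⟩, Subtype.ext hA_exp⟩
  obtain ⟨l, _, rfl⟩ := exists_isFiniteMeasure_map_eq h_cont h_surj m
  refine ⟨l, Measure.isProbabilityMeasure_of_map expSO, ?_⟩
  rw [← hm, Measure.map_map measurable_subtype_coe h_cont.measurable]
  rfl

lemma IsHaarLike.map_mul_prod {α β : Type*} [MeasurableSpace α] [MeasurableSpace β]
    (hH : IsHaarLike (SO n) H) (P : Measure α) [IsProbabilityMeasure P] (l : Measure β) [SFinite l]
    {f : α → Matrix (Fin n) (Fin n) ℝ} (hf : Measurable f) (hf_mem : ∀ ω, f ω ∈ SO n)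
    {g : β → Matrix (Fin n) (Fin n) ℝ} (hg : Measurable g) (hg_map : l.map g = H) :
    (P.prod l).map (fun z => g z.2 * f z.1) = H := by
  have hgf : Measurable fun z : α × β => g z.2 * f z.1 :=
    (hg.comp measurable_snd).mul (hf.comp measurable_fst)
  refine Measure.ext_of_lintegral _ fun F hF => ?_
  have hinv (ω : α) : ∫⁻ A, F (g A * f ω) ∂l = ∫⁻ y, F y ∂H := by
    have hF_mul : Measurable fun y => F (y * f ω) := hF.comp (measurable_mul_const _)
    conv_rhs => rw [← (hH.2.2 _ (hf_mem ω)).2]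
    rw [lintegral_map hF (measurable_mul_const _), ← hg_map, lintegral_map hF_mul hg]
  have hF_prod : Measurable fun z : α × β => F (g z.2 * f z.1) := hF.comp hgf
  rw [lintegral_map hF hgf, lintegral_prod _ hF_prod.aemeasurable]
  simp [hinv]

lemma IsHaarLike.pathCoupled (hH : IsHaarLike (SO n) H) (μ : Measure (Matrix (Fin n) (Fin n) ℝ))
    [IsProbabilityMeasure μ] (hμ : μ (SO n)ᶜ = 0) :
    PathCoupled μ H (ENNReal.ofReal (Real.pi ^ 2 * n)) := by
  have := hH.1
  obtain ⟨m, _, hm⟩ :=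
    exists_isProbabilityMeasure_map_val_eq (isCompact_SO n).isClosed.measurableSet μ hμ
  obtain ⟨l, _, hl⟩ := exists_isProbabilityMeasure_map_exp_eq H hH.2.1
  refine ⟨_, inferInstance, m.prod l, fun ω u => NormedSpace.exp (u • ω.2.1) * ω.1.1,
    inferInstance, ⟨?_, fun ω => isSOPath_exp_smul_mul ω.2.2.1 ω.1.2⟩, ?_, ?_, ?_⟩
  · exact (NormedSpace.exp_continuous.measurable.comp
      (measurable_snd.smul (measurable_subtype_coe.comp measurable_fst.snd))).mul
      (measurable_subtype_coe.comp measurable_fst.fst)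
  · simp only [zero_smul, NormedSpace.exp_zero, one_mul]
    have hfst : (m.prod l).map Prod.fst = m := Measure.fst_prod
    calc (m.prod l).map (fun ω => ω.1.1)
        = ((m.prod l).map Prod.fst).map Subtype.val :=
          (Measure.map_map measurable_subtype_coe measurable_fst).symm
      _ = μ := by rw [hfst, hm]
  · simp only [one_smul]
    exact hH.map_mul_prod m l measurable_subtype_coe Subtype.coe_prop
      (NormedSpace.exp_continuous.measurable.comp measurable_subtype_coe) hl
  · refine (lintegral_mono (g := fun _ => ENNReal.ofReal (Real.pi ^ 2 * n)) fun ω => ?_).trans_eq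
      (by simp)
    rw [energy_exp_smul_mul ω.2.2.1 ω.1.2]
    exact ENNReal.ofReal_le_ofReal ω.2.2.2

end Haar

section MixingTime

variable {ρ : ℝ → ℝ}

lemma isProbabilityMeasure_angleMeasure (hρ_nonneg : ∀ θ ∈ Set.Icc 0 (2 * Real.pi), 0 ≤ ρ θ)
    (hρ_int : ∫ θ in Set.Icc 0 (2 * Real.pi), ρ θ = 1) :
    IsProbabilityMeasure (angleMeasure ρ) := by
  have hint : IntegrableOn ρ (Set.Icc 0 (2 * Real.pi)) := .of_integral_ne_zero (by simp [hρ_int])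
  refine ⟨?_⟩
  rw [angleMeasure, withDensity_apply _ MeasurableSet.univ, Measure.restrict_univ,
    ← ofReal_integral_eq_lintegral_ofReal hint
      ((ae_restrict_iff' measurableSet_Icc).mpr (.of_forall hρ_nonneg)),
    hρ_int, ENNReal.ofReal_one]

lemma uniformAngle_le_angleMeasure {c : ℝ} (hρ : ∀ θ ∈ Set.Icc 0 (2 * Real.pi), c ≤ ρ θ) :
    uniformAngle c ≤ angleMeasure ρ := by
  rw [uniformAngle, angleMeasure, ← withDensity_const]
  refine withDensity_mono ((ae_restrict_iff' measurableSet_Icc).mpr (.of_forall fun θ hθ => ?_))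
  exact ENNReal.ofReal_le_ofReal (hρ θ hθ)

lemma one_sub_pow_mul_sq_le_one {s x : ℝ} (hs : s ≤ 1) (hx : 0 < x) {t : ℕ}
    (ht : 2 * Real.log x ≤ t * s) : (1 - s) ^ t * x ^ 2 ≤ 1 := by
  have hx_sq : Real.exp (2 * Real.log x) = x ^ 2 := by
    rw [two_mul, Real.exp_add, Real.exp_log hx, sq]
  calc (1 - s) ^ t * x ^ 2
      ≤ Real.exp (-s) ^ t * Real.exp (2 * Real.log x) := by
        rw [hx_sq]
        gcongr
        exact Real.one_sub_le_exp_neg s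
    _ = Real.exp (2 * Real.log x - t * s) := by
        rw [← Real.exp_nat_mul, ← Real.exp_add]
        ring_nf
    _ ≤ 1 := Real.exp_le_one_iff.mpr (sub_nonpos.mpr ht)

lemma two_mul_le_mul_div_choose_two {n : ℕ} (hn : 2 ≤ n) {q y : ℝ} (hq : 0 < q) {t : ℕ}
    (ht : (n : ℝ) ^ 2 / q * y ≤ t) : 2 * y ≤ t * (q / n.choose 2) := by
  have hN : (0 : ℝ) < n.choose 2 := Nat.cast_pos.mpr (Nat.choose_pos hn)
  have hNn : 2 * (n.choose 2 : ℝ) ≤ n ^ 2 := by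
    rw [Nat.cast_choose_two]
    linarith [Nat.cast_nonneg (α := ℝ) n]
  rw [div_mul_eq_mul_div, div_le_iff₀ hq] at ht
  rw [mul_div_assoc', le_div_iff₀ hN]
  rcases le_total y 0 with hy | hy
  · exact (mul_nonpos_of_nonpos_of_nonneg (by linarith) hN.le).trans (by positivity)
  · calc 2 * y * n.choose 2 = 2 * (n.choose 2 : ℝ) * y := by ring
      _ ≤ n ^ 2 * y := by gcongr
      _ ≤ t * q := ht

lemma contraction_pow_mul_le {n : ℕ} (hn : 2 ≤ n) {q ε : ℝ} (hq0 : 0 < q) (hq1 : q ≤ 1)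
    (hε : 0 < ε) {t : ℕ} (ht : (n : ℝ) ^ 2 / q * Real.log (Real.pi * √n / ε) ≤ t) :
    (1 - q / n.choose 2) ^ t * (Real.pi ^ 2 * n) ≤ ε ^ 2 := by
  have hN : (1 : ℝ) ≤ n.choose 2 := Nat.one_le_cast.mpr (Nat.choose_pos hn)
  have hx : 0 < Real.pi * √n / ε := by positivity
  have hx_sq : Real.pi ^ 2 * n = (Real.pi * √n / ε) ^ 2 * ε ^ 2 := by
    rw [← mul_pow, div_mul_cancel₀ _ hε.ne', mul_pow, Real.sq_sqrt n.cast_nonneg]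
  rw [hx_sq, ← mul_assoc]
  refine mul_le_of_le_one_left (sq_nonneg ε) ?_
  exact one_sub_pow_mul_sq_le_one (div_le_one_of_le₀ (hq1.trans hN) (by linarith)) hx
    (two_mul_le_mul_div_choose_two hn hq0 ht)

theorem kac_walk_nonuniform_mixing_time_general {n : ℕ} (hn : 2 ≤ n) {c : ℝ} (hc : 0 < c)
    (ν : Measure ℝ) [IsProbabilityMeasure ν] (hν : uniformAngle c ≤ ν) {ε : ℝ} (hε : 0 < ε)
    (μ : Measure (Matrix (Fin n) (Fin n) ℝ)) [IsProbabilityMeasure μ] (hμ : μ (SO n)ᶜ = 0) {t : ℕ}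
    (ht : (n : ℝ) ^ 2 / (2 * Real.pi * c) * Real.log (Real.pi * √n / ε) ≤ t) :
    wassersteinE (DSO n) 2 (kernelIterate (kacKernel n ν) t μ) (haarLike (SO n)) ≤
      ENNReal.ofReal ε := by
  have hq : 2 * Real.pi * c ≤ 1 := two_pi_mul_le_one hc.le hν
  have hN : (1 : ℝ) ≤ n.choose 2 := Nat.one_le_cast.mpr (Nat.choose_pos hn)
  have hfactor : 0 ≤ 1 - 2 * Real.pi * c / n.choose 2 :=
    sub_nonneg.mpr (div_le_one_of_le₀ (hq.trans hN) (by linarith))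
  have hH := isHaarLike_haarLike_SO n
  have hcoupled := (hH.pathCoupled μ hμ).kernelIterate hn hc.le hν t
  rw [hH.kernelIterate_kacKernel hn ν t] at hcoupled
  calc wassersteinE (DSO n) 2 (kernelIterate (kacKernel n ν) t μ) (haarLike (SO n))
      ≤ (ENNReal.ofReal (1 - 2 * Real.pi * c / n.choose 2) ^ t *
          ENNReal.ofReal (Real.pi ^ 2 * n)) ^ (1 / 2 : ℝ) := hcoupled.wassersteinE_le
    _ ≤ ENNReal.ofReal (ε ^ 2) ^ (1 / 2 : ℝ) := by
        rw [← ENNReal.ofReal_pow hfactor, ← ENNReal.ofReal_mul (pow_nonneg hfactor t)]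
        gcongr
        exact contraction_pow_mul_le hn (by positivity) hq hε ht
    _ = ENNReal.ofReal ε := by
        rw [ENNReal.ofReal_rpow_of_nonneg (sq_nonneg ε) (by norm_num), ← Real.sqrt_eq_rpow,
          Real.sqrt_sq hε.le]

end MixingTime

/-- **Theorem 4.** If the angle density `ρ` is bounded below by `ρ_min > 0`, then for every
`n ≥ 2` and `ε > 0` the walk `K^{(ρ)}` satisfies
`τ_{D,2}(ε) ≤ ⌈(n²/(2π ρ_min)) ln(π√n/ε)⌉`: for every probability measure `μ` on `SO(n)`
and every integer `t ≥ (n²/(2π ρ_min)) ln(π√n/ε)`, the time-`t` distribution is within `ε`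
of the Haar measure in `L²` transportation cost for the intrinsic metric `D`. -/
theorem kac_walk_nonuniform_mixing_time (n : ℕ) (hn : 2 ≤ n)
    (ρ : ℝ → ℝ) (hρcont : ContinuousOn ρ (Set.Icc 0 (2 * Real.pi)))
    (hρint : ∫ θ in Set.Icc 0 (2 * Real.pi), ρ θ = 1)
    (ρmin : ℝ) (hρleast : IsLeast (ρ '' Set.Icc 0 (2 * Real.pi)) ρmin) (hρ0 : 0 < ρmin)
    (ε : ℝ) (hε : 0 < ε)
    (μ : Measure (Matrix (Fin n) (Fin n) ℝ)) (hμprob : IsProbabilityMeasure μ)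
    (hμSO : μ (SO n)ᶜ = 0) (t : ℕ)
    (ht : (n : ℝ) ^ 2 / (2 * Real.pi * ρmin) * Real.log (Real.pi * Real.sqrt n / ε)
      ≤ (t : ℝ)) :
    wassersteinE (DSO n) 2 (kernelIterate (kacKernelRho n ρ) t μ) (haarLike (SO n)) ≤
      ENNReal.ofReal ε := by
  have hρ : ∀ θ ∈ Set.Icc 0 (2 * Real.pi), ρmin ≤ ρ θ := fun θ hθ => hρleast.2 ⟨θ, hθ, rfl⟩
  have := isProbabilityMeasure_angleMeasure (fun θ hθ => hρ0.le.trans (hρ θ hθ)) hρint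
  exact kac_walk_nonuniform_mixing_time_general hn hρ0 (angleMeasure ρ)
    (uniformAngle_le_angleMeasure hρ) hε μ hμSO ht

end
end
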